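/- Criterion for the D_4^+ singularity: let f be a generalized timelike minimal surface with real Weierstrass data (g1, g2, ω1 du, ω2 dv) and let p be a point. Then f is A-equivalent at p to the D_4^+ singularity f_{D4+}(u,v) = (uv, u^2 + 3v^2, u^2v + v^3) at the origin if and only if, at p: ω1 = 0, ω2 = 0, g1 g2 ≠ 1, (g1)_u (g2)_v ≠ 0, and (ω1)_u (ω2)_v ≠ 0. -/

import Mathlib

noncomputable section

open Real Filter

abbrev R2 : Type := ℝ × ℝ
abbrev R3 : Type := ℝ × ℝ × ℝ

/-- The partial derivative in the `u`-direction. -/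
def pu (f : R2 → R3) (p : R2) : R3 := fderiv ℝ f p (1, 0)
/-- The partial derivative in the `v`-direction. -/
def pv (f : R2 → R3) (p : R2) : R3 := fderiv ℝ f p (0, 1)

/-- Determinant of three column vectors in ℝ³. -/
def det3 (a b c : R3) : ℝ :=
  a.1 * (b.2.1 * c.2.2 - b.2.2 * c.2.1)
  - b.1 * (a.2.1 * c.2.2 - a.2.2 * c.2.1)
  + c.1 * (a.2.1 * b.2.2 - a.2.2 * b.2.1)

/-- Determinant of two vectors in ℝ². -/
def det2 (a b : R2) : ℝ := a.1 * b.2 - a.2 * b.1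

/-- Euclidean inner product on ℝ³. -/
def ip3 (a b : R3) : ℝ := a.1 * b.1 + a.2.1 * b.2.1 + a.2.2 * b.2.2

/-- `f : ℝ² → ℝ³ = 𝕃³` is the generalized timelike minimal surface with real Weierstrass
data `(g1, g2, w1 du, w2 dv)`: it is smooth, its partial derivatives are
`f_u = (ω1/2)·(-1-g1², 1-g1², 2g1)` and `f_v = (ω2/2)·(1+g2², 1-g2², -2g2)`
(which encodes the Weierstrass-type integral representation), and it is an immersion
on an open dense set. -/
structure IsGTMS (f : R2 → R3) (g1 g2 w1 w2 : ℝ → ℝ) : Prop where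
  smooth_f : ContDiff ℝ (⊤ : ℕ∞) f
  smooth_g1 : ContDiff ℝ (⊤ : ℕ∞) g1
  smooth_g2 : ContDiff ℝ (⊤ : ℕ∞) g2
  smooth_w1 : ContDiff ℝ (⊤ : ℕ∞) w1
  smooth_w2 : ContDiff ℝ (⊤ : ℕ∞) w2
  deriv_u : ∀ p : R2, pu f p =
    ((-1 - g1 p.1 ^ 2) * w1 p.1 / 2, (1 - g1 p.1 ^ 2) * w1 p.1 / 2, g1 p.1 * w1 p.1)
  deriv_v : ∀ p : R2, pv f p =
    ((1 + g2 p.2 ^ 2) * w2 p.2 / 2, (1 - g2 p.2 ^ 2) * w2 p.2 / 2, -(g2 p.2 * w2 p.2))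
  dense_immersion : Dense {p : R2 | Function.Injective (fderiv ℝ f p)}

/-- `Φ` is a germ of diffeomorphism at `p`. -/
def IsLocalDiffeoAt {E F : Type*} [NormedAddCommGroup E] [NormedSpace ℝ E]
    [NormedAddCommGroup F] [NormedSpace ℝ F] (Φ : E → F) (p : E) : Prop :=
  ∃ (U : Set E) (V : Set F) (Φinv : F → E),
    IsOpen U ∧ p ∈ U ∧ IsOpen V ∧ Φ p ∈ V ∧
    ContDiffOn ℝ (⊤ : ℕ∞) Φ U ∧ ContDiffOn ℝ (⊤ : ℕ∞) Φinv V ∧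
    Set.MapsTo Φ U V ∧ Set.MapsTo Φinv V U ∧
    (∀ x ∈ U, Φinv (Φ x) = x) ∧ (∀ y ∈ V, Φ (Φinv y) = y)

/-- 𝒜-equivalence of the germ of `f1` at `p1` and the germ of `f2` at `p2`. -/
def AEquiv (f1 : R2 → R3) (p1 : R2) (f2 : R2 → R3) (p2 : R2) : Prop :=
  ∃ (Φ : R2 → R2) (Ψ : R3 → R3),
    IsLocalDiffeoAt Φ p1 ∧ Φ p1 = p2 ∧
    IsLocalDiffeoAt Ψ (f1 p1) ∧ Ψ (f1 p1) = f2 p2 ∧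
    ∀ᶠ x in nhds p1, Ψ (f1 x) = f2 (Φ x)

/-- The canonical unit normal of a generalized timelike minimal surface. -/
def gtmsNormal (g1 g2 : ℝ → ℝ) (p : R2) : R3 :=
  (Real.sqrt ((1 - g1 p.1 * g2 p.2) ^ 2 + 2 * (g1 p.1 + g2 p.2) ^ 2))⁻¹ •
    (g1 p.1 + g2 p.2, -g1 p.1 + g2 p.2, 1 + g1 p.1 * g2 p.2)

/-- The signed area density function `λ = det(f_u, f_v, n)`. -/
def areaDensity (f : R2 → R3) (g1 g2 : ℝ → ℝ) (p : R2) : ℝ :=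
  det3 (pu f p) (pv f p) (gtmsNormal g1 g2 p)

/-- `f` is a front at `p`: the Legendrian lift `(f, n)` is an immersion at `p`,
where `n` is the canonical unit normal. -/
def IsFrontAt (f : R2 → R3) (g1 g2 : ℝ → ℝ) (p : R2) : Prop :=
  Function.Injective (fderiv ℝ (fun q => (f q, gtmsNormal g1 g2 q)) p)

/-- The differential of `f` at `p` has rank one. -/
def RankOne (f : R2 → R3) (p : R2) : Prop :=
  LinearMap.rank (fderiv ℝ f p).toLinearMap = 1

/-- Directional derivative of `F` along the vector field `X`. -/
def vD (X : R2 → R2) (F : R2 → R3) : R2 → R3 := fun q => fderiv ℝ F q (X q)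

/-- `φ_i = g_i' / (g_i² ω_i)`. -/
def phiW (g w : ℝ → ℝ) : ℝ → ℝ := fun t => deriv g t / (g t ^ 2 * w t)
/-- `Φ_i = (g_i/g_i') φ_i'`. -/
def PhiW (g w : ℝ → ℝ) : ℝ → ℝ := fun t => g t / deriv g t * deriv (phiW g w) t

/-- standard cuspidal butterfly -/
def fCBF : R2 → R3 := fun q =>
  (q.1, 5 * q.2 ^ 4 + 2 * q.1 * q.2, 4 * q.2 ^ 5 + q.1 * q.2 ^ 2 - q.1 ^ 2)
/-- standard cuspidal S₁⁺ singularity -/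
def fCS1p : R2 → R3 := fun q => (q.1, q.2 ^ 2, q.2 ^ 3 * (q.1 ^ 2 + q.2 ^ 2))
/-- standard cuspidal S₁⁻ singularity -/
def fCS1m : R2 → R3 := fun q => (q.1, q.2 ^ 2, q.2 ^ 3 * (q.1 ^ 2 - q.2 ^ 2))
/-- standard cuspidal edge -/
def fCE : R2 → R3 := fun q => (q.1, q.2 ^ 2, q.2 ^ 3)
/-- standard (2,5)-cuspidal edge -/
def fCE25 : R2 → R3 := fun q => (q.1, q.2 ^ 2, q.2 ^ 5)
/-- standard cuspidal beaks -/
def fCBK : R2 → R3 := fun q =>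
  (q.2, q.1 ^ 3 - q.1 * q.2 ^ 2, 3 * q.1 ^ 4 - 2 * q.1 ^ 2 * q.2 ^ 2)
/-- standard cuspidal lips -/
def fCLP : R2 → R3 := fun q =>
  (q.2, q.1 ^ 3 + q.1 * q.2 ^ 2, 3 * q.1 ^ 4 + 2 * q.1 ^ 2 * q.2 ^ 2)
/-- standard D₄⁺ singularity -/
def fD4p : R2 → R3 := fun q =>
  (q.1 * q.2, q.1 ^ 2 + 3 * q.2 ^ 2, q.1 ^ 2 * q.2 + q.2 ^ 3)
/-- standard D₄⁻ singularity -/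
def fD4m : R2 → R3 := fun q =>
  (q.1 * q.2, q.1 ^ 2 - 3 * q.2 ^ 2, q.1 ^ 2 * q.2 - q.2 ^ 3)

open scoped ContDiff Topology

/-- The derivative of a function of temperate growth has temperate growth. -/
theorem Function.HasTemperateGrowth.fderiv_right {E F : Type} [NormedAddCommGroup E]
    [NormedSpace ℝ E] [NormedAddCommGroup F] [NormedSpace ℝ F] {f : E → F}
    (hf : f.HasTemperateGrowth) : (fderiv ℝ f).HasTemperateGrowth := by
  refine ⟨hf.1.fderiv_right (by simp), fun n => ?_⟩
  simpa only [norm_iteratedFDeriv_fderiv] using hf.2 (n + 1)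

/-- Integrating a function of temperate growth against a weight with finite moments gives a smooth
function of the remaining variables. -/
theorem contDiff_integral_smul_of_hasTemperateGrowth {V E : Type} [NormedAddCommGroup V]
    [NormedSpace ℝ V] [FiniteDimensional ℝ V] [MeasurableSpace V] [BorelSpace V]
    [NormedAddCommGroup E] [NormedSpace ℝ E] [FiniteDimensional ℝ E]
    (μ : MeasureTheory.Measure V) (φ : V → ℝ) 
    (hφ : MeasureTheory.AEStronglyMeasurable φ μ)
    (hint : ∀ k : ℕ, MeasureTheory.Integrable (fun ξ => (1 + ‖ξ‖) ^ k * ‖φ ξ‖) μ)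
    {F : Type} [NormedAddCommGroup F] [NormedSpace ℝ F] 
    (G : V × E → F) (hG : G.HasTemperateGrowth) :
    ContDiff ℝ ∞ fun x : E => ∫ ξ, φ ξ • G (ξ, x) ∂μ := by
  suffices H : ∀ n : ℕ, ∀ (F : Type) [NormedAddCommGroup F] [NormedSpace ℝ F] 
      (G : V × E → F) (_ : G.HasTemperateGrowth),
      ContDiff ℝ n fun x : E => ∫ ξ, φ ξ • G (ξ, x) ∂μ by
    exact contDiff_infty.2 fun n => H n F G hG
  have key : ∀ (F : Type) [NormedAddCommGroup F] [NormedSpace ℝ F] 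
      (G : V × E → F) (_ : G.HasTemperateGrowth), ∀ x₀, 
      HasFDerivAt (fun x : E => ∫ ξ, φ ξ • G (ξ, x) ∂μ)
        (∫ ξ, φ ξ • (fderiv ℝ G (ξ, x₀)).comp (ContinuousLinearMap.inr ℝ V E) ∂μ) x₀ := by
    intro F _ _ G hG x₀
    have hcont := hG.1.continuous
    have hcont' := (hG.1.continuous_fderiv (by simp))
    have hbd : ∀ (F : Type) [NormedAddCommGroup F] [NormedSpace ℝ F] 
      (G : V × E → F) (k : ℕ) (C : ℝ), (∀ x, ‖G x‖ ≤ C * (1 + ‖x‖) ^ k) → 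
      ∀ x ∈ Metric.ball x₀ 1, ∀ ξ, ‖G (ξ, x)‖ ≤ C * ((2 + ‖x₀‖) ^ k * (1 + ‖ξ‖) ^ k) := by
      intro F _ _ G k C h x hx ξ
      refine (h _).trans ?_
      have hC : 0 ≤ C := by simpa using (norm_nonneg _).trans (h 0)
      gcongr
      rw [← mul_pow]
      gcongr
      have h1 : ‖x‖ ≤ 1 + ‖x₀‖ := by
        have := norm_sub_norm_le x x₀
        rw [Metric.mem_ball, dist_eq_norm] at hx
        linarith
      have h2 : ‖(ξ, x)‖ ≤ ‖ξ‖ + ‖x‖ := by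
        rw [Prod.norm_mk]
        exact max_le_add_of_nonneg (norm_nonneg _) (norm_nonneg _)
      nlinarith [norm_nonneg ξ, norm_nonneg x₀]
    obtain ⟨k, C, hC⟩ := hG.2 0
    simp only [norm_iteratedFDeriv_zero] at hC
    obtain ⟨k', C', hC'⟩ := hG.2 1
    simp only [norm_iteratedFDeriv_one] at hC'
    have hmeas : ∀ x, MeasureTheory.AEStronglyMeasurable (fun ξ => φ ξ • G (ξ, x)) μ := fun x =>
      hφ.smul (by fun_prop : Continuous fun ξ => G (ξ, x)).aestronglyMeasurable
    have hinr : ‖ContinuousLinearMap.inr ℝ V E‖ ≤ 1 := ContinuousLinearMap.norm_inr_le_one ℝ V E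
    refine hasFDerivAt_integral_of_dominated_of_fderiv_le (s := Metric.ball x₀ 1)
      (bound := fun ξ => C' * (2 + ‖x₀‖) ^ k' * ((1 + ‖ξ‖) ^ k' * ‖φ ξ‖))
      (F := fun x ξ => φ ξ • G (ξ, x))
      (F' := fun x ξ => φ ξ • (fderiv ℝ G (ξ, x)).comp (ContinuousLinearMap.inr ℝ V E))
      (Metric.ball_mem_nhds _ one_pos) (.of_forall hmeas) ?_ ?_ ?_ ((hint k').const_mul _) ?_
    · refine ((hint k).const_mul (C * (2 + ‖x₀‖) ^ k)).mono' (hmeas x₀) (.of_forall fun ξ => ?_)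
      have := hbd F G k C hC x₀ (Metric.mem_ball_self one_pos) ξ
      rw [norm_smul]
      nlinarith [norm_nonneg (φ ξ)]
    · exact hφ.smul (by fun_prop : Continuous fun ξ => 
        (fderiv ℝ G (ξ, x₀)).comp (ContinuousLinearMap.inr ℝ V E)).aestronglyMeasurable
    · refine .of_forall fun ξ x hx => ?_
      have := hbd _ (fderiv ℝ G) k' C' hC' x hx ξ
      rw [norm_smul]
      have h3 : ‖(fderiv ℝ G (ξ, x)).comp (ContinuousLinearMap.inr ℝ V E)‖ ≤ ‖fderiv ℝ G (ξ, x)‖ :=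
        (ContinuousLinearMap.opNorm_comp_le _ _).trans
          (mul_le_of_le_one_right (norm_nonneg _) hinr)
      nlinarith [norm_nonneg (φ ξ)]
    · refine .of_forall fun ξ x hx => ?_
      have h1 : HasFDerivAt (fun x : E => (ξ, x)) (ContinuousLinearMap.inr ℝ V E) x :=
        hasFDerivAt_prodMk_right ξ x
      exact (((hG.1.differentiable (by simp)) (ξ, x)).hasFDerivAt.comp x h1).const_smul (φ ξ)
  intro n
  induction n with
  | zero =>
    intro F _ _ G hG
    exact contDiff_zero.2 <| continuous_iff_continuousAt.2 fun x => (key F G hG x).continuousAt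
  | succ n ih =>
    intro F _ _ G hG
    have hd : Function.HasTemperateGrowth
        fun q => (fderiv ℝ G q).comp (ContinuousLinearMap.inr ℝ V E) := by
      exact (((ContinuousLinearMap.compL ℝ E (V × E) F).flip
        (ContinuousLinearMap.inr ℝ V E)).hasTemperateGrowth).comp hG.fderiv_right
    push_cast
    rw [contDiff_succ_iff_fderiv]
    refine ⟨fun x => (key F G hG x).differentiableAt, by simp, ?_⟩
    rw [show fderiv ℝ (fun x : E => ∫ ξ, φ ξ • G (ξ, x) ∂μ) = _ from 
      funext fun x => (key F G hG x).fderiv]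
    exact ih _ _ hd

/-- A germ of smooth function extends to a compactly supported smooth function. -/
theorem exists_contDiff_hasCompactSupport_eventuallyEq {E F : Type} [NormedAddCommGroup E]
    [NormedSpace ℝ E] [FiniteDimensional ℝ E] [NormedAddCommGroup F] [NormedSpace ℝ F] {h : E → F}
    {x₀ : E} (hh : ∀ᶠ x in 𝓝 x₀, ContDiffAt ℝ ∞ h x) :
    ∃ k : E → F, ContDiff ℝ ∞ k ∧ HasCompactSupport k ∧ k =ᶠ[𝓝 x₀] h := by
  obtain ⟨r, hr, hU⟩ := Metric.eventually_nhds_iff_ball.1 hh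
  let χ : ContDiffBump x₀ := ⟨r / 4, r / 2, by positivity, by linarith⟩
  refine ⟨fun x => χ x • h x, ?_, χ.hasCompactSupport.smul_right, ?_⟩
  · refine contDiff_iff_contDiffAt.2 fun x => ?_
    by_cases hx : x ∈ Metric.ball x₀ r
    · exact χ.contDiff.contDiffAt.smul (hU x hx)
    · have : (fun x => χ x • h x) =ᶠ[𝓝 x] fun _ => 0 := by
        have hx' : x ∈ (Metric.closedBall x₀ (r / 2))ᶜ := by
          simp only [Metric.mem_ball, Set.mem_compl_iff, Metric.mem_closedBall] at hx ⊢
          linarith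
        filter_upwards [Metric.isClosed_closedBall.isOpen_compl.mem_nhds hx'] with y hy
        have hy' : χ y = 0 := χ.zero_of_le_dist (by
          simpa [χ, Metric.mem_closedBall] using (not_le.1 (by simpa using hy)).le)
        rw [hy', zero_smul]
      exact contDiffAt_const.congr_of_eventuallyEq this
  · filter_upwards [χ.eventuallyEq_one] with x hx
    simp [hx]

/-- Hadamard's lemma with parameters. -/
theorem exists_eventually_eq_add_mul {E : Type} [NormedAddCommGroup E] [NormedSpace ℝ E]
    [FiniteDimensional ℝ E] (h : E × ℝ → ℝ) (hh : ContDiff ℝ ∞ h) (x₀ : E) :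
    ∃ k : E × ℝ → ℝ, ContDiff ℝ ∞ k ∧
      ∀ᶠ q in 𝓝 (x₀, (0 : ℝ)), h q = h (q.1, 0) + q.2 * k q := by
  obtain ⟨g, hg, hgc, hgh⟩ := exists_contDiff_hasCompactSupport_eventuallyEq
    (h := h) (x₀ := (x₀, (0 : ℝ))) (.of_forall fun x => hh.contDiffAt)
  have hgt := hgc.hasTemperateGrowth hg
  let D : E × ℝ → ℝ := fun q => fderiv ℝ g q (0, 1)
  have hD : D.HasTemperateGrowth :=
    (ContinuousLinearMap.apply ℝ ℝ ((0, 1) : E × ℝ)).hasTemperateGrowth.comp hgt.fderiv_right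
  let m : ℝ × (E × ℝ) → E × ℝ := fun w => (w.2.1, w.1 * w.2.2)
  have hfst : Function.HasTemperateGrowth fun w : ℝ × (E × ℝ) => w.1 :=
    (ContinuousLinearMap.fst ℝ ℝ (E × ℝ)).hasTemperateGrowth
  have hsnd : Function.HasTemperateGrowth fun w : ℝ × (E × ℝ) => w.2.2 :=
    ((ContinuousLinearMap.snd ℝ E ℝ).comp
      (ContinuousLinearMap.snd ℝ ℝ (E × ℝ))).hasTemperateGrowth
  have hm : m.HasTemperateGrowth := by
    have h1 : Function.HasTemperateGrowth fun w : ℝ × (E × ℝ) => (w.2.1, (0 : ℝ)) :=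
      ((ContinuousLinearMap.inl ℝ E ℝ).comp ((ContinuousLinearMap.fst ℝ E ℝ).comp
        (ContinuousLinearMap.snd ℝ ℝ (E × ℝ)))).hasTemperateGrowth
    have h2 : Function.HasTemperateGrowth fun w : ℝ × (E × ℝ) => ((0 : E), w.1 * w.2.2) :=
      (ContinuousLinearMap.inr ℝ E ℝ).hasTemperateGrowth.comp (hfst.mul hsnd)
    convert h1.add h2 using 1
    ext w <;> simp [m]
  refine ⟨fun x => ∫ t in Set.Icc (0 : ℝ) 1, (1 : ℝ) • (D ∘ m) (t, x),
    contDiff_integral_smul_of_hasTemperateGrowth _ (fun _ => 1)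
      MeasureTheory.aestronglyMeasurable_const (fun k => ?_) _ (hD.comp hm), ?_⟩
  · exact (by fun_prop : Continuous fun ξ : ℝ => (1 + ‖ξ‖) ^ k * ‖(1 : ℝ)‖).continuousOn
      |>.integrableOn_compact isCompact_Icc
  · have hc : Tendsto (fun q : E × ℝ => (q.1, (0 : ℝ))) (𝓝 (x₀, 0)) (𝓝 (x₀, 0)) :=
      Continuous.tendsto' (by fun_prop) _ _ rfl
    filter_upwards [hgh, hc.eventually hgh] with q hq hq0
    rw [← hq, ← hq0, MeasureTheory.integral_Icc_eq_integral_Ioc,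
      ← intervalIntegral.integral_of_le zero_le_one, ← intervalIntegral.integral_const_mul]
    have hd : ∀ t : ℝ, HasDerivAt (fun t : ℝ => g (q.1, t * q.2))
        (q.2 * ((1 : ℝ) • (D ∘ m) (t, q))) t := by
      intro t
      have h1 : HasDerivAt (fun t : ℝ => (q.1, t * q.2)) ((0 : E), 1 * q.2) t :=
        (hasDerivAt_const t q.1).prodMk ((hasDerivAt_id t).mul_const q.2)
      have h2 := ((hg.differentiable (by simp)) (q.1, t * q.2)).hasFDerivAt.comp_hasDerivAt t h1
      have : ((0 : E), 1 * q.2) = q.2 • ((0 : E), (1 : ℝ)) := by simp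
      rw [this, map_smul] at h2
      have h3 : q.2 * ((1 : ℝ) • (D ∘ m) (t, q)) =
          q.2 • fderiv ℝ g (q.1, t * q.2) ((0 : E), (1 : ℝ)) := by simp [D, m]
      rw [h3]
      exact h2
    have hcont : Continuous fun t : ℝ => q.2 * ((1 : ℝ) • (D ∘ m) (t, q)) := by
      have h1 : Continuous fun t : ℝ => (D ∘ m) (t, q) :=
        (hD.comp hm).1.continuous.comp (by fun_prop)
      simp only [one_smul]; exact continuous_const.mul h1
    rw [intervalIntegral.integral_eq_sub_of_hasDerivAt (fun t _ => hd t)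
      (hcont.intervalIntegrable _ _)]
    simp

theorem exists_contDiff_cos_sqrt : ∃ e : ℝ → ℝ, ContDiff ℝ ∞ e ∧ ∀ u, e (u ^ 2) = Real.cos u := by
  let c : ℕ → ℝ := fun n => (-1) ^ n / (2 * n).factorial
  have hc : ∀ n, c n ≠ 0 := fun n => by positivity
  have hrad : (FormalMultilinearSeries.ofScalars ℝ c).radius = ⊤ := by
    refine FormalMultilinearSeries.ofScalars_radius_eq_top_of_tendsto ℝ c (.of_forall hc) ?_
    have h : ∀ n : ℕ, ‖c n.succ‖ / ‖c n‖ = 1 / ((2 * (n : ℝ) + 2) * (2 * n + 1)) := by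
      intro n
      have : (2 * n.succ).factorial = (2 * n + 2) * ((2 * n + 1) * (2 * n).factorial) := by
        rw [show 2 * n.succ = 2 * n + 1 + 1 by simp only [Nat.succ_eq_add_one]; ring,
          Nat.factorial_succ, Nat.factorial_succ]
      have h0 : ((2 * n).factorial : ℝ) ≠ 0 := by positivity
      simp only [c, this, norm_div, norm_pow, norm_neg, norm_one, one_pow, RCLike.norm_natCast]
      push_cast
      field_simp
    simp_rw [h]
    refine squeeze_zero (fun n => by positivity) (fun n => ?_)
      (tendsto_one_div_add_atTop_nhds_zero_nat (𝕜 := ℝ))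
    gcongr
    have : (0 : ℝ) ≤ n := n.cast_nonneg
    nlinarith
  have hs := (FormalMultilinearSeries.ofScalars ℝ c).hasFPowerSeriesOnBall (by simp [hrad])
  rw [hrad] at hs
  refine ⟨_, contDiff_iff_contDiffAt.2 fun x => (hs.analyticAt_of_mem (by simp)).contDiffAt, ?_⟩
  intro u
  have h1 := hs.hasSum (y := u ^ 2) (by simp)
  rw [zero_add] at h1
  have h2 := Real.hasSum_cos u
  refine h1.unique ?_
  have h3 : (fun n => (FormalMultilinearSeries.ofScalars ℝ c n) fun _ => u ^ 2) =
      fun n : ℕ => (-1) ^ n * u ^ (2 * n) / ((2 * n).factorial : ℝ) := by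
    funext n
    rw [FormalMultilinearSeries.ofScalars_apply_eq]
    simp [c, pow_mul]
    ring
  exact h3 ▸ h2

/-- A smooth function of temperate growth whose value at `u ^ 2` is `cos u`. -/
theorem exists_hasTemperateGrowth_cos_sqrt : ∃ e : ℝ → ℝ, e.HasTemperateGrowth ∧
    ∀ u, e (u ^ 2) = Real.cos u := by
  obtain ⟨e₀, he₀, he₀c⟩ := exists_contDiff_cos_sqrt
  let e : ℝ → ℝ := fun t => Real.smoothTransition (t + 2) * e₀ t
  have he : ContDiff ℝ ∞ e :=
    (Real.smoothTransition.contDiff.comp (contDiff_id.add contDiff_const)).mul he₀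
  have hec : ∀ u, e (u ^ 2) = Real.cos u := fun u => by
    simp only [e, Real.smoothTransition.one_of_one_le (show 1 ≤ u ^ 2 + 2 by nlinarith), one_mul,
      he₀c]
  have heneg : ∀ t < -2, e t = 0 := fun t ht => by
    simp only [e, Real.smoothTransition.zero_of_nonpos (by linarith : t + 2 ≤ 0), zero_mul]
  have hd : ∀ n, Differentiable ℝ (iteratedDeriv n e) := fun n =>
    he.differentiable_iteratedDeriv n (mod_cast WithTop.coe_lt_top _)
  have hd1 : ∀ n t, HasDerivAt (iteratedDeriv n e) (iteratedDeriv (n + 1) e t) t := fun n t => by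
    rw [iteratedDeriv_succ]
    exact (hd n t).hasDerivAt
  have h1 : ∀ u, 2 * u * iteratedDeriv 1 e (u ^ 2) = -Real.sin u := by
    intro u
    have := (hd1 0 (u ^ 2)).comp u (hasDerivAt_pow 2 u)
    have h2 : iteratedDeriv 0 e ∘ (fun u => u ^ 2) = Real.cos := by
      funext u; simp [hec]
    rw [h2] at this
    have := this.unique (Real.hasDerivAt_cos u)
    simp [-iteratedDeriv_one] at this
    linarith
  have h2 : ∀ u, 4 * u ^ 2 * iteratedDeriv 2 e (u ^ 2) + 2 * iteratedDeriv 1 e (u ^ 2)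
      + e (u ^ 2) = 0 := by
    intro u
    have := ((hasDerivAt_id u).const_mul 2).mul ((hd1 1 (u ^ 2)).comp u (hasDerivAt_pow 2 u))
    have h3 : ((fun y => 2 * id y) * (iteratedDeriv 1 e ∘ fun u => u ^ 2)) =
        fun u => -Real.sin u := by
      funext u; simp [← h1]
    rw [h3] at this
    have := this.unique (Real.hasDerivAt_sin u).neg
    simp [-iteratedDeriv_one] at this
    rw [hec]
    linarith
  have hode : ∀ n : ℕ, ∀ t > 0, 4 * t * iteratedDeriv (n + 2) e t
      + (4 * n + 2) * iteratedDeriv (n + 1) e t + iteratedDeriv n e t = 0 := by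
    intro n
    induction n with
    | zero =>
      intro t ht
      have := h2 (Real.sqrt t)
      rw [Real.sq_sqrt ht.le] at this
      simpa using this
    | succ n ih =>
      intro t ht
      have h3 := ((((hasDerivAt_id t).const_mul 4).mul (hd1 (n + 2) t)).add
        ((hd1 (n + 1) t).const_mul (4 * (n : ℝ) + 2))).add (hd1 n t)
      have h4 := h3.congr_of_eventuallyEq (f₁ := fun _ => (0 : ℝ)) (by
        filter_upwards [lt_mem_nhds ht] with s hs
        simpa using (ih s hs).symm)
      have := h4.unique (hasDerivAt_const t 0)
      simp at this
      push_cast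
      rw [show n + 1 + 2 = n + 2 + 1 by ring]
      linarith
  have hbd1 : ∀ n : ℕ, (∃ C, ∀ t ≥ 1, |iteratedDeriv n e t| ≤ C) ∧ 
      ∃ C, ∀ t ≥ 1, |iteratedDeriv (n + 1) e t| ≤ C := by
    intro n
    induction n with
    | zero =>
      refine ⟨⟨1, fun t ht => ?_⟩, ⟨1, fun t ht => ?_⟩⟩
      · have := hec (Real.sqrt t)
        rw [Real.sq_sqrt (by linarith)] at this
        simpa [this] using Real.abs_cos_le_one _
      · have h3 := h1 (Real.sqrt t)
        rw [Real.sq_sqrt (by linarith)] at h3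
        have h4 := Real.abs_sin_le_one (Real.sqrt t)
        rw [← abs_neg, ← h3, abs_mul] at h4
        have h5 : 1 ≤ Real.sqrt t := Real.one_le_sqrt.2 ht
        rw [abs_of_pos (by linarith)] at h4
        rw [zero_add]
        nlinarith [abs_nonneg (iteratedDeriv 1 e t)]
    | succ n ih =>
      refine ⟨ih.2, ?_⟩
      obtain ⟨⟨C, hC⟩, ⟨D, hD⟩⟩ := ih
      refine ⟨(4 * n + 2) * D + C, fun t ht => ?_⟩
      have h3 := hode n t (by linarith)
      have h4 : 4 * t * |iteratedDeriv (n + 2) e t| ≤ (4 * n + 2) * D + C := by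
        rw [← abs_of_pos (by linarith : 0 < 4 * t), ← abs_mul,
          show 4 * t * iteratedDeriv (n + 2) e t
          = - ((4 * n + 2) * iteratedDeriv (n + 1) e t + iteratedDeriv n e t) by linarith, abs_neg]
        refine (abs_add_le _ _).trans ?_
        rw [abs_mul, abs_of_nonneg (by positivity : (0 : ℝ) ≤ 4 * n + 2)]
        have := hC t ht
        have := hD t ht
        gcongr
      rw [show n + 1 + 1 = n + 2 by ring]
      nlinarith [abs_nonneg (iteratedDeriv (n + 2) e t)]
  refine ⟨e, ⟨he, fun n => ?_⟩, hec⟩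
  obtain ⟨C, hC⟩ := (hbd1 n).1
  obtain ⟨D, hD⟩ := isCompact_Icc.exists_bound_of_continuousOn (s := Set.Icc (-3 : ℝ) 1)
    (hd n).continuous.continuousOn
  refine ⟨0, max C (max D 0), fun t => ?_⟩
  rw [pow_zero, mul_one, norm_iteratedFDeriv_eq_norm_iteratedDeriv]
  rcases le_total 1 t with ht | ht
  · exact (hC t ht).trans (le_max_left _ _)
  rcases le_total (-3) t with ht' | ht'
  · exact (hD t ⟨ht', ht⟩).trans ((le_max_left _ _).trans (le_max_right _ _))
  · have : iteratedDeriv n e =ᶠ[𝓝 t] iteratedDeriv n fun _ => (0 : ℝ) := by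
      refine Filter.EventuallyEq.iteratedDeriv ?_ n
      filter_upwards [gt_mem_nhds (by linarith : t < -2)] with s hs using heneg s hs
    rw [this.eq_of_nhds]
    simp

open MeasureTheory FourierTransform SchwartzMap in
/-- A compactly supported smooth real function on the plane is a superposition of
plane waves whose coefficients have moments of all orders. -/
theorem exists_integral_cos_sin {k : ℝ × ℝ → ℝ} (hk : ContDiff ℝ ∞ k) (hc : HasCompactSupport k) :
    ∃ R I : ℂ → ℝ, Continuous R ∧ Continuous I ∧
      (∀ n : ℕ, Integrable fun ξ => (1 + ‖ξ‖) ^ n * ‖R ξ‖) ∧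
      (∀ n : ℕ, Integrable fun ξ => (1 + ‖ξ‖) ^ n * ‖I ξ‖) ∧
      ∀ q, k q = ∫ ξ, (R ξ * Real.cos (2 * π * ξ.re * q.1 + 2 * π * ξ.im * q.2)
        - I ξ * Real.sin (2 * π * ξ.re * q.1 + 2 * π * ξ.im * q.2)) := by
  let H : ℂ → ℂ := fun z => (k (Complex.equivRealProdCLM z) : ℂ)
  have hH : ContDiff ℝ ∞ H :=
    Complex.ofRealCLM.contDiff.comp (hk.comp Complex.equivRealProdCLM.contDiff)
  have hHc : HasCompactSupport H :=
    (hc.comp_homeomorph Complex.equivRealProdCLM.toHomeomorph).comp_left (g := Complex.ofReal) rfl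
  let s : 𝓢(ℂ, ℂ) := hHc.toSchwartzMap hH
  let t : 𝓢(ℂ, ℂ) := 𝓕 s
  have hmom : ∀ n : ℕ, Integrable fun ξ => (1 + ‖ξ‖) ^ n * ‖t ξ‖ := by
    intro n
    have h1 := ((integrable_pow_mul volume t 0).add (integrable_pow_mul volume t n)).const_mul
      (2 ^ n)
    refine h1.mono' (by fun_prop) (.of_forall fun ξ => ?_)
    rw [Real.norm_of_nonneg (by positivity)]
    simp only [Pi.add_apply, pow_zero]
    rw [← add_mul, ← mul_assoc]
    gcongr
    rcases le_total ‖ξ‖ 1 with h | h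
    · calc (1 + ‖ξ‖) ^ n ≤ 2 ^ n := by gcongr; linarith
        _ ≤ _ := le_mul_of_one_le_right (by positivity) (by simp)
    · calc (1 + ‖ξ‖) ^ n ≤ (2 * ‖ξ‖) ^ n := by gcongr; linarith
        _ = 2 ^ n * ‖ξ‖ ^ n := mul_pow _ _ _
        _ ≤ _ := by gcongr; linarith
  have htc : Continuous t := t.continuous
  refine ⟨fun ξ => (t ξ).re, fun ξ => (t ξ).im, by fun_prop, by fun_prop, fun n => ?_, fun n => ?_,
    fun q => ?_⟩
  · refine (hmom n).mono' (by fun_prop) (.of_forall fun ξ => ?_)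
    rw [Real.norm_of_nonneg (by positivity)]
    gcongr
    exact Complex.abs_re_le_norm _
  · refine (hmom n).mono' (by fun_prop) (.of_forall fun ξ => ?_)
    rw [Real.norm_of_nonneg (by positivity)]
    gcongr
    exact Complex.abs_im_le_norm _
  · have h1 : 𝓕⁻ t = s := FourierTransform.fourierInv_fourier_eq s
    have h2 : (𝓕⁻ t) (Complex.equivRealProdCLM.symm q) = (k q : ℂ) := by
      rw [h1]; change H (Complex.equivRealProdCLM.symm q) = _
      simp only [H, ContinuousLinearEquiv.apply_symm_apply]
    rw [SchwartzMap.fourierInv_coe, Real.fourierInv_eq'] at h2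
    have h3 := congrArg Complex.re h2
    have hint : Integrable fun v : ℂ =>
        Complex.exp (↑(2 * π * inner ℝ v (Complex.equivRealProdCLM.symm q)) * Complex.I) • t v := by
      refine t.integrable.mono (by fun_prop) (.of_forall fun ξ => ?_)
      rw [norm_smul, Complex.norm_exp_ofReal_mul_I, one_mul]
    rw [← Complex.reCLM_apply, ← ContinuousLinearMap.integral_comp_comm _ hint] at h3
    rw [Complex.ofReal_re] at h3
    rw [← h3]
    refine integral_congr_ae (.of_forall fun ξ => ?_)
    have h4 : 2 * π * inner ℝ ξ (Complex.equivRealProdCLM.symm q)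
        = 2 * π * ξ.re * q.1 + 2 * π * ξ.im * q.2 := by
      simp [Complex.inner, Complex.equivRealProdCLM_symm_apply]
      ring
    simp only [Complex.reCLM_apply, h4, smul_eq_mul, Complex.mul_re, Complex.exp_ofReal_mul_I_re,
      Complex.exp_ofReal_mul_I_im]
    ring

/-- The sine analogue of `exists_hasTemperateGrowth_cos_sqrt`, along with the cosine. -/
theorem exists_hasTemperateGrowth_cos_sin : ∃ C S : ℝ → ℝ, C.HasTemperateGrowth ∧
    S.HasTemperateGrowth ∧ (∀ u, Real.cos u = C (u ^ 2)) ∧ ∀ u, Real.sin u = u * S (u ^ 2) := by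
  obtain ⟨C, hC, hcos⟩ := exists_hasTemperateGrowth_cos_sqrt
  refine ⟨C, fun t => -2 * fderiv ℝ C t 1, hC, ?_, fun u => (hcos u).symm, fun u => ?_⟩
  · exact (Function.HasTemperateGrowth.const (-2 : ℝ)).mul
      ((ContinuousLinearMap.apply ℝ ℝ (1 : ℝ)).hasTemperateGrowth.comp hC.fderiv_right)
  · have h1 := ((hC.1.differentiable (by simp)) (u ^ 2)).hasDerivAt.comp u (hasDerivAt_pow 2 u)
    have h2 : C ∘ (fun u => u ^ 2) = Real.cos := by
      funext u; simp [hcos]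
    rw [h2] at h1
    have := h1.unique (Real.hasDerivAt_cos u)
    change Real.sin u = u * (-2 * fderiv ℝ C (u ^ 2) 1)
    rw [fderiv_apply_one_eq_deriv]
    simp at this
    linarith

open MeasureTheory in
/-- **Whitney's theorem** on even and odd functions, in two variables. -/
theorem exists_eventually_eq_even_odd {h : ℝ × ℝ → ℝ}
    (hh : ∀ᶠ q in 𝓝 ((0 : ℝ), (0 : ℝ)), ContDiffAt ℝ ∞ h q) :
    ∃ a b c d : ℝ × ℝ → ℝ, ContDiff ℝ ∞ a ∧ ContDiff ℝ ∞ b ∧ ContDiff ℝ ∞ c ∧ ContDiff ℝ ∞ d ∧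
      ∀ᶠ q in 𝓝 ((0 : ℝ), (0 : ℝ)), h q = a (q.1 ^ 2, q.2 ^ 2) + q.1 * b (q.1 ^ 2, q.2 ^ 2)
        + q.2 * c (q.1 ^ 2, q.2 ^ 2) + q.1 * q.2 * d (q.1 ^ 2, q.2 ^ 2) := by
  obtain ⟨k, hk, hkc, hkh⟩ := exists_contDiff_hasCompactSupport_eventuallyEq hh
  obtain ⟨R, I, hRc, hIc, hR, hI, hint⟩ := exists_integral_cos_sin hk hkc
  obtain ⟨C, S, hC, hS, hcos, hsin⟩ := exists_hasTemperateGrowth_cos_sin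
  let X : ℂ × (ℝ × ℝ) → ℝ := fun w => 2 * π * w.1.re
  let Y : ℂ × (ℝ × ℝ) → ℝ := fun w => 2 * π * w.1.im
  have hX : X.HasTemperateGrowth := (Function.HasTemperateGrowth.const (2 * π)).mul
    (Complex.reCLM.comp (ContinuousLinearMap.fst ℝ ℂ (ℝ × ℝ))).hasTemperateGrowth
  have hY : Y.HasTemperateGrowth := (Function.HasTemperateGrowth.const (2 * π)).mul
    (Complex.imCLM.comp (ContinuousLinearMap.fst ℝ ℂ (ℝ × ℝ))).hasTemperateGrowth
  let X' : ℂ × (ℝ × ℝ) → ℝ := fun w => X w ^ 2 * w.2.1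
  let Y' : ℂ × (ℝ × ℝ) → ℝ := fun w => Y w ^ 2 * w.2.2
  have hX' : X'.HasTemperateGrowth := (hX.pow 2).mul
    ((ContinuousLinearMap.fst ℝ ℝ ℝ).comp (ContinuousLinearMap.snd ℝ ℂ (ℝ × ℝ))).hasTemperateGrowth
  have hY' : Y'.HasTemperateGrowth := (hY.pow 2).mul
    ((ContinuousLinearMap.snd ℝ ℝ ℝ).comp (ContinuousLinearMap.snd ℝ ℂ (ℝ × ℝ))).hasTemperateGrowth
  have hCX := hC.comp hX'
  have hCY := hC.comp hY'
  have hSX := hS.comp hX'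
  have hSY := hS.comp hY'
  have key : ∀ (φ : ℂ → ℝ), Continuous φ → (∀ n : ℕ, Integrable fun ξ => (1 + ‖ξ‖) ^ n * ‖φ ξ‖) →
      ∀ (G : ℂ × (ℝ × ℝ) → ℝ), G.HasTemperateGrowth → ∀ x, Integrable fun ξ => φ ξ * G (ξ, x) := by
    intro φ hφ hφi G hG x
    obtain ⟨n, D, hD⟩ := hG.2 0
    refine ((hφi n).const_mul (D * (1 + ‖x‖) ^ n)).mono'
      (hφ.mul (hG.1.continuous.comp (by fun_prop))).aestronglyMeasurable (.of_forall fun ξ => ?_)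
    have h1 := hD (ξ, x)
    have h0 : 0 ≤ D := by simpa using (norm_nonneg _).trans (hD 0)
    rw [norm_iteratedFDeriv_zero] at h1
    have h2 : 1 + ‖(ξ, x)‖ ≤ (1 + ‖x‖) * (1 + ‖ξ‖) := by
      have := norm_prod_le_iff.1 (le_refl ‖(ξ, x)‖)
      have h3 : ‖(ξ, x)‖ ≤ ‖ξ‖ + ‖x‖ := by
        rw [Prod.norm_def]; exact max_le_add_of_nonneg (norm_nonneg _) (norm_nonneg _)
      nlinarith [norm_nonneg ξ, norm_nonneg x, mul_nonneg (norm_nonneg ξ) (norm_nonneg x)]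
    calc ‖φ ξ * G (ξ, x)‖ = ‖φ ξ‖ * ‖G (ξ, x)‖ := norm_mul _ _
      _ ≤ ‖φ ξ‖ * (D * ((1 + ‖x‖) * (1 + ‖ξ‖)) ^ n) := by
        gcongr
        exact h1.trans (by gcongr)
      _ = _ := by rw [mul_pow]; ring
  have hsm : ∀ (φ : ℂ → ℝ), Continuous φ → (∀ n : ℕ, Integrable fun ξ => (1 + ‖ξ‖) ^ n * ‖φ ξ‖) →
      ∀ (G : ℂ × (ℝ × ℝ) → ℝ), G.HasTemperateGrowth →
        ContDiff ℝ ∞ fun x => ∫ ξ, φ ξ * G (ξ, x) :=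
    fun φ hφ hφi G hG =>
      contDiff_integral_smul_of_hasTemperateGrowth volume φ hφ.aestronglyMeasurable hφi G hG
  have hG1 := hCX.mul hCY
  have hG2 := (hX.mul (hSX.mul hCY)).neg
  have hG3 := (hY.mul (hCX.mul hSY)).neg
  have hG4 := ((hX.mul hY).mul (hSX.mul hSY)).neg
  refine ⟨_, _, _, _, hsm R hRc hR _ hG1, hsm I hIc hI _ hG2, hsm I hIc hI _ hG3,
    hsm R hRc hR _ hG4, ?_⟩
  filter_upwards [hkh] with q hq
  rw [← hq, hint, ← integral_const_mul, ← integral_const_mul, ← integral_const_mul]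
  have i1 := key R hRc hR _ hG1 (q.1 ^ 2, q.2 ^ 2)
  have i2 := (key I hIc hI _ hG2 (q.1 ^ 2, q.2 ^ 2)).const_mul q.1
  have i3 := (key I hIc hI _ hG3 (q.1 ^ 2, q.2 ^ 2)).const_mul q.2
  have i4 := (key R hRc hR _ hG4 (q.1 ^ 2, q.2 ^ 2)).const_mul (q.1 * q.2)
  rw [← integral_add i1 i2, ← integral_add (by exact i1.add i2) i3,
    ← integral_add (by exact (i1.add i2).add i3) i4]
  refine integral_congr_ae (.of_forall fun ξ => ?_)
  simp only [Real.cos_add, Real.sin_add]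
  simp only [Pi.mul_apply, Pi.neg_apply, Function.comp, X', Y', X, Y, hcos, hsin, mul_pow]
  ring

theorem isLocalDiffeoAt_of_injective {E : Type} [NormedAddCommGroup E] [NormedSpace ℝ E]
    [FiniteDimensional ℝ E] {Φ : E → E} {p : E} (hΦ : ∀ᶠ x in 𝓝 p, ContDiffAt ℝ ∞ Φ x)
    (hinj : Function.Injective (fderiv ℝ Φ p)) : IsLocalDiffeoAt Φ p := by
  have : CompleteSpace E := FiniteDimensional.complete ℝ E
  let e₀ : E ≃L[ℝ] E :=
    (LinearEquiv.ofInjectiveEndo (fderiv ℝ Φ p).toLinearMap hinj).toContinuousLinearEquiv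
  have he₀ : (e₀ : E →L[ℝ] E) = fderiv ℝ Φ p := by ext x; rfl
  have hp := hΦ.self_of_nhds
  have hfd : ContinuousAt (fderiv ℝ Φ) p := hp.continuousAt_fderiv (by simp)
  have hinv : ∀ᶠ x in 𝓝 p, ∃ e : E ≃L[ℝ] E, (e : E →L[ℝ] E) = fderiv ℝ Φ x :=
    hfd.eventually (he₀ ▸ e₀.nhds)
  obtain ⟨s, hs, hso, hps⟩ := eventually_nhds_iff.1 (hΦ.and hinv)
  have hd : HasFDerivAt Φ (e₀ : E →L[ℝ] E) p := he₀ ▸ (hp.differentiableAt (by simp)).hasFDerivAt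
  let e := (hp.toOpenPartialHomeomorph Φ hd (by simp)).restrOpen s hso
  have hpe : p ∈ e.source := ⟨hp.mem_toOpenPartialHomeomorph_source hd (by simp), hps⟩
  refine ⟨e.source, e.target, e.symm, e.open_source, hpe, e.open_target, e.map_source hpe,
    fun x hx => (hs x hx.2).1.contDiffWithinAt, fun y hy => ?_, fun x hx => e.map_source hx,
    fun y hy => e.map_target hy, fun x hx => e.left_inv hx, fun y hy => e.right_inv hy⟩
  have hy' := hs _ (e.map_target hy).2
  obtain ⟨e', he'⟩ := hy'.2
  refine (e.contDiffAt_symm hy (f₀' := e') ?_ hy'.1).contDiffWithinAt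
  rw [he']
  exact (hy'.1.differentiableAt (by simp)).hasFDerivAt

/-- A local diffeomorphism has a smooth local inverse, which may be taken to be globally defined. -/
theorem IsLocalDiffeoAt.exists_inverse {E F : Type} [NormedAddCommGroup E] [NormedSpace ℝ E]
    [NormedAddCommGroup F] [NormedSpace ℝ F] [FiniteDimensional ℝ F] {Φ : E → F} {p : E}
    (h : IsLocalDiffeoAt Φ p) : ∃ η : F → E, ContDiff ℝ ∞ η ∧ η (Φ p) = p ∧
      (∀ᶠ x in 𝓝 p, η (Φ x) = x) ∧ ∀ᶠ y in 𝓝 (Φ p), Φ (η y) = y := by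
  obtain ⟨U, V, Ψ, hU, hpU, hV, hpV, hΦ, hΨ, hm, hm', h1, h2⟩ := h
  obtain ⟨η, hη, -, hηΨ⟩ := exists_contDiff_hasCompactSupport_eventuallyEq (h := Ψ) (x₀ := Φ p)
    (by filter_upwards [hV.mem_nhds hpV] with y hy using hΨ.contDiffAt (hV.mem_nhds hy))
  have hc : ContinuousAt Φ p := hΦ.continuousOn.continuousAt (hU.mem_nhds hpU)
  refine ⟨η, hη, by rw [hηΨ.eq_of_nhds, h1 p hpU], ?_, ?_⟩
  · filter_upwards [hc.eventually hηΨ, hU.mem_nhds hpU] with x hx hxU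
    rw [hx, h1 x hxU]
  · filter_upwards [hηΨ, hV.mem_nhds hpV] with y hy hyV
    rw [hy, h2 y hyV]

theorem IsLocalDiffeoAt.contDiffAt {E F : Type} [NormedAddCommGroup E] [NormedSpace ℝ E]
    [NormedAddCommGroup F] [NormedSpace ℝ F] {Φ : E → F} {p : E}
    (h : IsLocalDiffeoAt Φ p) : ∀ᶠ x in 𝓝 p, ContDiffAt ℝ ∞ Φ x := by
  obtain ⟨U, V, Ψ, hU, hpU, hV, hpV, hΦ, hΨ, hm, hm', h1, h2⟩ := h
  filter_upwards [hU.mem_nhds hpU] with y hy using hΦ.contDiffAt (hU.mem_nhds hy)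

/-- The derivative of a local diffeomorphism is injective. -/
theorem IsLocalDiffeoAt.injective_fderiv {E F : Type} [NormedAddCommGroup E] [NormedSpace ℝ E]
    [NormedAddCommGroup F] [NormedSpace ℝ F] [FiniteDimensional ℝ F] {Φ : E → F} {p : E}
    (h : IsLocalDiffeoAt Φ p) : Function.Injective (fderiv ℝ Φ p) := by
  obtain ⟨η, hη, -, h1, -⟩ := h.exists_inverse
  have h2 := ((hη.differentiable (by simp)) (Φ p)).hasFDerivAt.comp p
    (h.contDiffAt.self_of_nhds.differentiableAt (by simp)).hasFDerivAt
  have h3 := (h2.congr_of_eventuallyEq (f₁ := id) (by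
    filter_upwards [h1] with x hx using hx.symm)).unique (hasFDerivAt_id p)
  intro x y hxy
  have := congrArg (fderiv ℝ η (Φ p)) hxy
  have hx := DFunLike.congr_fun h3 x
  have hy := DFunLike.congr_fun h3 y
  simp only [ContinuousLinearMap.comp_apply, ContinuousLinearMap.id_apply] at hx hy
  rw [← hx, ← hy, this]

theorem IsLocalDiffeoAt.comp {E F G : Type} [NormedAddCommGroup E] [NormedSpace ℝ E]
    [NormedAddCommGroup F] [NormedSpace ℝ F] [NormedAddCommGroup G] [NormedSpace ℝ G]
    {Φ : E → F} {Θ : F → G} {p : E} (hΘ : IsLocalDiffeoAt Θ (Φ p)) (hΦ : IsLocalDiffeoAt Φ p) :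
    IsLocalDiffeoAt (Θ ∘ Φ) p := by
  obtain ⟨U, V, Ψ, hU, hpU, hV, hpV, hΦ, hΨ, hm, hm', h1, h2⟩ := hΦ
  obtain ⟨U', V', Ψ', hU', hpU', hV', hpV', hΘ, hΨ', gm, gm', g1, g2⟩ := hΘ
  refine ⟨U ∩ Φ ⁻¹' U', V' ∩ Ψ' ⁻¹' V, Ψ ∘ Ψ', hΦ.continuousOn.isOpen_inter_preimage hU hU',
    ⟨hpU, hpU'⟩, hΨ'.continuousOn.isOpen_inter_preimage hV' hV, ⟨hpV', ?_⟩,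
    hΘ.comp (hΦ.mono Set.inter_subset_left) fun x hx => hx.2,
    hΨ.comp (hΨ'.mono Set.inter_subset_left) fun x hx => hx.2, ?_, ?_, ?_, ?_⟩
  · simpa [g1 _ hpU'] using hpV
  · exact fun x hx => ⟨gm hx.2, by simpa [g1 _ hx.2] using hm hx.1⟩
  · exact fun x hx => ⟨hm' hx.2, by simpa [h2 _ hx.2] using gm' hx.1⟩
  · intro x hx
    simp [g1 _ hx.2, h1 _ hx.1]
  · intro x hx
    simp [h2 _ hx.2, g2 _ hx.1]

theorem isLocalDiffeoAt_id {E : Type} [NormedAddCommGroup E] [NormedSpace ℝ E] (p : E) :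
    IsLocalDiffeoAt (fun x : E => x) p :=
  ⟨Set.univ, Set.univ, fun x => x, isOpen_univ, trivial, isOpen_univ, trivial, contDiffOn_id,
    contDiffOn_id, fun _ _ => trivial, fun _ _ => trivial, fun _ _ => rfl, fun _ _ => rfl⟩

theorem isLocalDiffeoAt_const_add_id {E : Type*} [NormedAddCommGroup E] [NormedSpace ℝ E]
    (a p : E) : IsLocalDiffeoAt (fun x => a + x) p :=
  ⟨Set.univ, Set.univ, fun x => -a + x, isOpen_univ, trivial, isOpen_univ, trivial,
    by fun_prop, by fun_prop, Set.mapsTo_univ _ _, Set.mapsTo_univ _ _,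
    fun _ _ => neg_add_cancel_left _ _, fun _ _ => add_neg_cancel_left _ _⟩

theorem AEquiv.trans {f g h : R2 → R3} {p q r : R2} (h₁ : AEquiv f p g q) (h₂ : AEquiv g q h r) :
    AEquiv f p h r := by
  obtain ⟨Φ, Ψ, hΦ, rfl, hΨ, hΨf, hfg⟩ := h₁
  obtain ⟨Φ', Ψ', hΦ', rfl, hΨ', hΨf', hgh⟩ := h₂
  refine ⟨Φ' ∘ Φ, Ψ' ∘ Ψ, hΦ'.comp hΦ, rfl, IsLocalDiffeoAt.comp (hΨf ▸ hΨ') hΨ, ?_, ?_⟩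
  · simp [hΨf, hΨf']
  · filter_upwards [hfg, hΦ.contDiffAt.self_of_nhds.continuousAt.eventually hgh] with x h1 h2
    simp [h1, h2]

theorem IsLocalDiffeoAt.exists_isLocalDiffeoAt_inverse {E F : Type} [NormedAddCommGroup E]
    [NormedSpace ℝ E] [NormedAddCommGroup F] [NormedSpace ℝ F] {Φ : E → F} {p : E}
    (h : IsLocalDiffeoAt Φ p) : ∃ Θ : F → E, IsLocalDiffeoAt Θ (Φ p) ∧ Θ (Φ p) = p ∧
      (∀ᶠ x in 𝓝 p, Θ (Φ x) = x) ∧ ∀ᶠ y in 𝓝 (Φ p), Φ (Θ y) = y := by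
  obtain ⟨U, V, Θ, hU, hp, hV, hq, h1, h2, h3, h4, h5, h6⟩ := h
  refine ⟨Θ, ⟨V, U, Φ, hV, hq, hU, h4 hq, h2, h1, h4, h3, h6, h5⟩, h5 p hp, ?_, ?_⟩
  · filter_upwards [hU.mem_nhds hp] using h5
  · filter_upwards [hV.mem_nhds hq] using h6

theorem AEquiv.symm {f g : R2 → R3} {p q : R2} (hf : ContinuousAt f p) (h : AEquiv f p g q) :
    AEquiv g q f p := by
  obtain ⟨Φ, Ψ, hΦ, rfl, hΨ, hfg, he⟩ := h
  obtain ⟨Φ', hΦ', hΦp, -, hΦr⟩ := hΦ.exists_isLocalDiffeoAt_inverse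
  obtain ⟨Ψ', hΨ', hΨp, hΨl, -⟩ := hΨ.exists_isLocalDiffeoAt_inverse
  refine ⟨Φ', Ψ', hΦ', hΦp, hfg ▸ hΨ', hfg ▸ hΨp, ?_⟩
  have hc : Tendsto Φ' (𝓝 (Φ p)) (𝓝 p) := by
    simpa only [hΦp] using hΦ'.contDiffAt.self_of_nhds.continuousAt.tendsto
  filter_upwards [hΦr, hc.eventually he, hc.eventually (hf.eventually hΨl)] with y h1 h2 h3
  rw [← h3, h2, h1]

theorem AEquiv.of_target {f g : R2 → R3} {p : R2} {Ψ : R3 → R3} (hΨ : IsLocalDiffeoAt Ψ (f p))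
    (h : ∀ᶠ x in 𝓝 p, Ψ (f x) = g x) : AEquiv f p g p :=
  ⟨fun x => x, Ψ, isLocalDiffeoAt_id p, rfl, hΨ, h.self_of_nhds, h⟩

theorem AEquiv.of_source {f g : R2 → R3} {p q : R2} {Φ : R2 → R2} (hΦ : IsLocalDiffeoAt Φ p)
    (hpq : Φ p = q) (h : ∀ᶠ x in 𝓝 p, f x = g (Φ x)) : AEquiv f p g q :=
  ⟨Φ, fun x => x, hΦ, hpq, isLocalDiffeoAt_id _, hpq ▸ h.self_of_nhds, h⟩

/-- Two cuspidal curves superposed: a model of the `D₄⁺` singularity as a translation surface. -/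
def sumOfCusps (q : R2) : R3 := (q.1 ^ 2, q.2 ^ 2, q.1 ^ 3 + q.2 ^ 3)

theorem aEquiv_sumOfCusps_fD4p : AEquiv sumOfCusps 0 fD4p (0, 0) := by
  have h3 : Real.sqrt 3 ≠ 0 := by positivity
  have h33 : Real.sqrt 3 ^ 2 = 3 := Real.sq_sqrt (by norm_num)
  refine ⟨fun q => ((q.1 - q.2) / 2, (q.1 + q.2) / (2 * √3)),
    fun w => ((w.1 - w.2.1) / (4 * √3), (w.1 + w.2.1) / 2, w.2.2 / (6 * √3)),
    ⟨Set.univ, Set.univ, fun q => (q.1 + √3 * q.2, √3 * q.2 - q.1), isOpen_univ, trivial,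
      isOpen_univ, trivial, by fun_prop, by fun_prop, fun _ _ => trivial, fun _ _ => trivial,
      fun x _ => ?_, fun x _ => ?_⟩, by simp,
    ⟨Set.univ, Set.univ, fun w => (w.2.1 + 2 * √3 * w.1, w.2.1 - 2 * √3 * w.1, 6 * √3 * w.2.2),
      isOpen_univ, trivial, isOpen_univ, trivial, by fun_prop, by fun_prop, fun _ _ => trivial,
      fun _ _ => trivial, fun x _ => ?_, fun x _ => ?_⟩, by simp [sumOfCusps, fD4p],
    .of_forall fun x => ?_⟩
  · ext <;> simp <;> field_simp <;> ring
  · ext <;> simp <;> field_simp <;> ring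
  · ext <;> simp <;> field_simp <;> ring
  · ext <;> simp <;> field_simp <;> ring
  · simp only [sumOfCusps, fD4p, Prod.mk.injEq]
    refine ⟨?_, ?_, ?_⟩
    · field_simp; ring
    · field_simp; rw [h33]; ring
    · field_simp; rw [h33]; ring

theorem exists_contDiff_pow_eq {E : Type} [NormedAddCommGroup E] [NormedSpace ℝ E]
    [FiniteDimensional ℝ E] {c : E → ℝ} (hc : ContDiff ℝ ∞ c) {x₀ : E} (h0 : 0 < c x₀) {n : ℕ}
    (hn : n ≠ 0) : ∃ r : E → ℝ, ContDiff ℝ ∞ r ∧ 0 < r x₀ ∧ ∀ᶠ x in 𝓝 x₀, r x ^ n = c x := by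
  have hpos : ∀ᶠ x in 𝓝 x₀, 0 < c x := hc.continuous.continuousAt.eventually (lt_mem_nhds h0)
  obtain ⟨r, hr, -, hrc⟩ := exists_contDiff_hasCompactSupport_eventuallyEq
    (h := fun x => c x ^ (n : ℝ)⁻¹) (x₀ := x₀) (by
      filter_upwards [hpos] with x hx using hc.contDiffAt.rpow_const_of_ne hx.ne')
  refine ⟨r, hr, ?_, ?_⟩
  · rw [hrc.eq_of_nhds]
    positivity
  · filter_upwards [hrc, hpos] with x hx hx'
    rw [hx, Real.rpow_inv_natCast_pow hx'.le hn]

theorem exists_contDiff_cube_eq {E : Type} [NormedAddCommGroup E] [NormedSpace ℝ E]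
    [FiniteDimensional ℝ E] {c : E → ℝ} (hc : ContDiff ℝ ∞ c) {x₀ : E} (h0 : c x₀ ≠ 0) :
    ∃ r : E → ℝ, ContDiff ℝ ∞ r ∧ r x₀ ≠ 0 ∧ ∀ᶠ x in 𝓝 x₀, r x ^ 3 = c x := by
  rcases h0.lt_or_gt with h | h
  · obtain ⟨r, hr, hr0, hrc⟩ := exists_contDiff_pow_eq hc.neg (x₀ := x₀) (by simpa using h)
      three_ne_zero
    refine ⟨fun x => -r x, hr.neg, neg_ne_zero.2 hr0.ne', ?_⟩
    filter_upwards [hrc] with x hx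
    linear_combination -hx
  · obtain ⟨r, hr, hr0, hrc⟩ := exists_contDiff_pow_eq hc h three_ne_zero
    exact ⟨r, hr, hr0.ne', hrc⟩

/-- Smooth division by a nonvanishing germ. -/
theorem exists_contDiff_mul_eq {E : Type} [NormedAddCommGroup E] [NormedSpace ℝ E]
    [FiniteDimensional ℝ E] {b c : E → ℝ} (hb : ContDiff ℝ ∞ b) (hc : ContDiff ℝ ∞ c) {x₀ : E}
    (h0 : c x₀ ≠ 0) : ∃ r : E → ℝ, ContDiff ℝ ∞ r ∧ ∀ᶠ x in 𝓝 x₀, r x * c x = b x := by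
  have hpos : ∀ᶠ x in 𝓝 x₀, c x ≠ 0 := hc.continuous.continuousAt.eventually_ne h0
  obtain ⟨r, hr, -, hrc⟩ := exists_contDiff_hasCompactSupport_eventuallyEq
    (h := fun x => b x / c x) (x₀ := x₀) (by
      filter_upwards [hpos] with x hx using hb.contDiffAt.div hc.contDiffAt hx)
  refine ⟨r, hr, ?_⟩
  filter_upwards [hrc, hpos] with x hx hx'
  rw [hx, div_mul_cancel₀ _ hx']

theorem isLocalDiffeoAt_mul_mul {r s : R2 → ℝ} (hr : ContDiff ℝ ∞ r) (hs : ContDiff ℝ ∞ s)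
    (hr0 : r 0 ≠ 0) (hs0 : s 0 ≠ 0) :
    IsLocalDiffeoAt (fun q : R2 => (q.1 * r q, q.2 * s q)) 0 := by
  refine isLocalDiffeoAt_of_injective (.of_forall fun q => by fun_prop) ?_
  have h1 := (hasFDerivAt_fst (𝕜 := ℝ) (p := (0 : R2))).mul
    ((hr.differentiable (by simp)) 0).hasFDerivAt
  have h2 := (hasFDerivAt_snd (𝕜 := ℝ) (p := (0 : R2))).mul
    ((hs.differentiable (by simp)) 0).hasFDerivAt
  have h3 := (h1.prodMk h2).fderiv
  rw [injective_iff_map_eq_zero]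
  intro v hv
  have hv' := (DFunLike.congr_fun h3 v).symm.trans hv
  simp [hr0, hs0, Prod.ext_iff] at hv'
  exact Prod.ext hv'.1 hv'.2

theorem isLocalDiffeoAt_of_hasDerivAt {φ : R3 → ℝ} (hφ : ContDiff ℝ ∞ φ) {p : R3} {m : ℝ}
    (hm : m ≠ 0) (h : HasDerivAt (fun t => φ (p.1, p.2.1, t)) m p.2.2) :
    IsLocalDiffeoAt (fun w : R3 => (w.1, w.2.1, φ w)) p := by
  refine isLocalDiffeoAt_of_injective (.of_forall fun q => by fun_prop) ?_
  have h0 := ((hφ.differentiable (by simp)) p).hasFDerivAt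
  have h1 := (hasFDerivAt_fst (𝕜 := ℝ) (p := p)).prodMk
    (((hasFDerivAt_fst (𝕜 := ℝ) (p := p.2)).comp p hasFDerivAt_snd).prodMk h0)
  have h2 : HasFDerivAt (fun w : R3 => (w.1, w.2.1, φ w)) _ p := h1
  rw [h2.fderiv, injective_iff_map_eq_zero]
  intro v hv
  obtain ⟨a, b, c⟩ := v
  simp only [ContinuousLinearMap.prod_apply, Prod.mk_eq_zero, ContinuousLinearMap.comp_apply,
    ContinuousLinearMap.coe_fst', ContinuousLinearMap.coe_snd'] at hv
  obtain ⟨rfl, rfl, hc⟩ := hv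
  have h3 : HasDerivAt (fun t : ℝ => (p.1, p.2.1, t)) ((0 : ℝ), (0 : ℝ), (1 : ℝ)) p.2.2 :=
    (hasDerivAt_const _ _).prodMk ((hasDerivAt_const _ _).prodMk (hasDerivAt_id _))
  have h4 := (h0.comp_hasDerivAt p.2.2 h3).unique h
  have h5 : ((0 : ℝ), (0 : ℝ), c) = c • ((0 : ℝ), (0 : ℝ), (1 : ℝ)) := by simp
  rw [h5, map_smul, h4, smul_eq_mul, mul_eq_zero] at hc
  simp [hc.resolve_right hm]

theorem tendsto_sq_sq : Tendsto (fun q : R2 => (q.1 ^ 2, q.2 ^ 2)) (𝓝 0) (𝓝 (0 : R2)) :=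
  Continuous.tendsto' (by fun_prop) _ _ (by simp)

theorem aEquiv_sumOfCusps_of_unit {f : R2 → R3} {c d : R2 → ℝ} (hc : ContDiff ℝ ∞ c)
    (hd : ContDiff ℝ ∞ d) (hc0 : c 0 ≠ 0) (hd0 : d 0 ≠ 0)
    (hf : ∀ᶠ q in 𝓝 (0 : R2), f q = (q.1 ^ 2, q.2 ^ 2,
      q.1 ^ 3 * c (q.1 ^ 2, q.2 ^ 2) + q.2 ^ 3 * d (q.1 ^ 2, q.2 ^ 2))) :
    AEquiv f 0 sumOfCusps 0 := by
  obtain ⟨r, hr, hr0, hrc⟩ := exists_contDiff_cube_eq hc hc0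
  obtain ⟨s, hs, hs0, hsd⟩ := exists_contDiff_cube_eq hd hd0
  have hf0 : f 0 = 0 := hf.self_of_nhds.trans (by simp)
  have h00 : (((0 : R2).1 ^ 2, (0 : R2).2 ^ 2) : R2) = 0 := by simp
  refine ⟨fun q => (q.1 * r (q.1 ^ 2, q.2 ^ 2), q.2 * s (q.1 ^ 2, q.2 ^ 2)),
    fun w => (w.1 * r (w.1, w.2.1) ^ 2, w.2.1 * s (w.1, w.2.1) ^ 2, w.2.2),
    isLocalDiffeoAt_mul_mul (r := fun q => r (q.1 ^ 2, q.2 ^ 2))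
      (s := fun q => s (q.1 ^ 2, q.2 ^ 2)) (hr.comp (by fun_prop)) (hs.comp (by fun_prop))
      (by simpa only [h00] using hr0) (by simpa only [h00] using hs0), by simp, ?_,
      by simp [hf0, sumOfCusps], ?_⟩
  · rw [hf0]
    refine isLocalDiffeoAt_of_injective (.of_forall fun q => by fun_prop) ?_
    have hr2 : ContDiff ℝ ∞ fun w : R3 => r (w.1, w.2.1) ^ 2 := by fun_prop
    have hs2 : ContDiff ℝ ∞ fun w : R3 => s (w.1, w.2.1) ^ 2 := by fun_prop
    have h1 := (hasFDerivAt_fst (𝕜 := ℝ) (p := (0 : R3))).mul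
      ((hr2.differentiable (by simp)) 0).hasFDerivAt
    have h2 := ((hasFDerivAt_fst (𝕜 := ℝ) (p := (0 : R3).2)).comp (0 : R3)
      hasFDerivAt_snd).mul ((hs2.differentiable (by simp)) 0).hasFDerivAt
    have h3 := (h1.prodMk (h2.prodMk ((hasFDerivAt_snd (𝕜 := ℝ) (p := (0 : R3).2)).comp (0 : R3)
      hasFDerivAt_snd))).fderiv
    rw [injective_iff_map_eq_zero]
    intro v hv
    have hv' := (DFunLike.congr_fun h3 v).symm.trans hv
    have e : ((0 : ℝ), (0 : ℝ)) = 0 := rfl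
    simp [hr0, hs0, Prod.ext_iff, e] at hv'
    exact Prod.ext hv'.1 (Prod.ext hv'.2.1 hv'.2.2)
  · filter_upwards [hf, tendsto_sq_sq.eventually hrc, tendsto_sq_sq.eventually hsd] with q h1 h2 h3
    rw [h1, ← h2, ← h3]
    simp only [sumOfCusps, Prod.mk.injEq]
    refine ⟨by ring, by ring, by ring⟩

theorem aEquiv_sumOfCusps_of_even_odd {f : R2 → R3} {E c d e : R2 → ℝ} (hE : ContDiff ℝ ∞ E)
    (hc : ContDiff ℝ ∞ c) (hd : ContDiff ℝ ∞ d) (he : ContDiff ℝ ∞ e) (hc0 : c 0 ≠ 0)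
    (hd0 : d 0 ≠ 0)
    (hf : ∀ᶠ q in 𝓝 (0 : R2), f q = (q.1 ^ 2, q.2 ^ 2, E (q.1 ^ 2, q.2 ^ 2) +
      q.1 ^ 3 * c (q.1 ^ 2, q.2 ^ 2) + q.2 ^ 3 * d (q.1 ^ 2, q.2 ^ 2) +
      q.1 ^ 3 * q.2 ^ 3 * e (q.1 ^ 2, q.2 ^ 2))) :
    AEquiv f 0 sumOfCusps 0 := by
  obtain ⟨k, hk, hke⟩ := exists_contDiff_mul_eq (b := e) (c := fun q => 2 * c q * d q) (x₀ := 0) he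
    (by fun_prop) (by simp [hc0, hd0])
  have hf0 : f 0 = (0, 0, E 0) := by
    have := hf.self_of_nhds
    simpa [show ((0 : ℝ), (0 : ℝ)) = 0 from rfl] using this
  let φ : R3 → ℝ := fun w => (w.2.2 - E (w.1, w.2.1)) -
    k (w.1, w.2.1) * (w.2.2 - E (w.1, w.2.1)) ^ 2 + k (w.1, w.2.1) *
      (w.1 ^ 3 * c (w.1, w.2.1) ^ 2 + w.2.1 ^ 3 * d (w.1, w.2.1) ^ 2 +
        w.1 ^ 3 * w.2.1 ^ 3 * e (w.1, w.2.1) ^ 2)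
  have hφ : ContDiff ℝ ∞ φ := by fun_prop
  refine (AEquiv.of_target (Ψ := fun w => (w.1, w.2.1, φ w)) (g := fun q => (q.1 ^ 2, q.2 ^ 2,
    q.1 ^ 3 * (fun z : R2 => c z - 2 * k z * d z * e z * z.2 ^ 3) (q.1 ^ 2, q.2 ^ 2) +
    q.2 ^ 3 * (fun z : R2 => d z - 2 * k z * c z * e z * z.1 ^ 3) (q.1 ^ 2, q.2 ^ 2))) ?_ ?_).trans
    (aEquiv_sumOfCusps_of_unit (c := fun z : R2 => c z - 2 * k z * d z * e z * z.2 ^ 3)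
      (d := fun z : R2 => d z - 2 * k z * c z * e z * z.1 ^ 3) (by fun_prop) (by fun_prop)
      (by simpa using hc0) (by simpa using hd0) (.of_forall fun _ => rfl))
  · rw [hf0]
    refine isLocalDiffeoAt_of_hasDerivAt hφ one_ne_zero ?_
    have h1 : HasDerivAt (fun t : ℝ => t - E 0) 1 (E 0) := (hasDerivAt_id _).sub_const _
    have h2 := h1.sub ((h1.pow 2).const_mul (k 0))
    simp only [φ]
    refine ((h2.add_const _).congr_deriv ?_)
    simp
  · filter_upwards [hf, tendsto_sq_sq.eventually hke] with q h1 h2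
    rw [h1]
    simp only [Prod.mk.injEq, true_and, φ]
    generalize E (q.1 ^ 2, q.2 ^ 2) = E at *
    generalize c (q.1 ^ 2, q.2 ^ 2) = c at *
    generalize d (q.1 ^ 2, q.2 ^ 2) = d at *
    generalize e (q.1 ^ 2, q.2 ^ 2) = e at *
    generalize k (q.1 ^ 2, q.2 ^ 2) = k at *
    linear_combination (-(q.1 ^ 3 * q.2 ^ 3)) * h2

theorem contDiff_prodSwap : ContDiff ℝ ∞ (Prod.swap : R2 → R2) :=
  contDiff_snd.prodMk contDiff_fst

theorem eventually_eq_zero_of_ne {g : ℝ → ℝ} (hg : ContinuousAt g 0)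
    (h : ∀ᶠ t in 𝓝 (0 : ℝ), t ≠ 0 → g t = 0) : ∀ᶠ t in 𝓝 (0 : ℝ), g t = 0 := by
  have h0 : g 0 = 0 := by
    have h1 : Tendsto g (𝓝[≠] 0) (𝓝 (g 0)) := hg.tendsto.mono_left nhdsWithin_le_nhds
    have h2 : Tendsto g (𝓝[≠] 0) (𝓝 0) := tendsto_const_nhds.congr' (by
      rw [EventuallyEq, eventually_nhdsWithin_iff]
      filter_upwards [h] with t ht ht' using (ht ht').symm)
    exact tendsto_nhds_unique h1 h2
  filter_upwards [h] with t ht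
  by_cases h' : t = 0
  · rw [h', h0]
  · exact ht h'

theorem hasDerivAt_comp_sq {g : R2 → ℝ} (hg : ContDiff ℝ ∞ g) (x : ℝ) :
    HasDerivAt (fun t : ℝ => g (x, t ^ 2)) 0 0 := by
  have h1 : HasDerivAt (fun t : ℝ => (x, t ^ 2)) ((0 : ℝ), (0 : ℝ)) 0 := by
    simpa using (hasDerivAt_const (0 : ℝ) x).prodMk (hasDerivAt_pow 2 (0 : ℝ))
  have h2 := ((hg.differentiable (by simp)) (x, (0 : ℝ) ^ 2)).hasFDerivAt.comp_hasDerivAt 0 h1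
  rw [show ((0 : ℝ), (0 : ℝ)) = 0 from rfl, map_zero] at h2
  exact h2

theorem tendsto_mk_zero : Tendsto (fun s : ℝ => ((s, 0) : R2)) (𝓝 0) (𝓝 0) :=
  Continuous.tendsto' (by fun_prop) _ _ rfl

theorem tendsto_swap_zero : Tendsto (Prod.swap : R2 → R2) (𝓝 0) (𝓝 0) :=
  Continuous.tendsto' (by fun_prop) _ _ rfl

/-- If `h` is singular in the second variable along the first axis, so are its odd parts. -/
theorem eventually_odd_parts_eq_zero {h a b c d : R2 → ℝ} (hh : ContDiff ℝ ∞ h)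
    (ha : ContDiff ℝ ∞ a) (hb : ContDiff ℝ ∞ b) (hc : ContDiff ℝ ∞ c) (hd : ContDiff ℝ ∞ d)
    (hW : ∀ᶠ q in 𝓝 (0 : R2), h q = a (q.1 ^ 2, q.2 ^ 2) + q.1 * b (q.1 ^ 2, q.2 ^ 2)
        + q.2 * c (q.1 ^ 2, q.2 ^ 2) + q.1 * q.2 * d (q.1 ^ 2, q.2 ^ 2))
    (hv : ∀ᶠ s in 𝓝 (0 : ℝ), fderiv ℝ h (s, 0) (0, 1) = 0) :
    (∀ᶠ s in 𝓝 (0 : ℝ), c (s ^ 2, 0) = 0) ∧ ∀ᶠ s in 𝓝 (0 : ℝ), d (s ^ 2, 0) = 0 := by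
  have key : ∀ᶠ s in 𝓝 (0 : ℝ), c (s ^ 2, 0) + s * d (s ^ 2, 0) = 0 := by
    have hW' : ∀ᶠ q in 𝓝 ((0 : ℝ), (0 : ℝ)), _ := hW
    filter_upwards [hW'.curry_nhds, hv] with s hs hvs
    have h1 : HasDerivAt (fun t : ℝ => (s, t)) ((0 : ℝ), (1 : ℝ)) 0 :=
      (hasDerivAt_const _ _).prodMk (hasDerivAt_id _)
    have h2 := ((hh.differentiable (by simp)) (s, 0)).hasFDerivAt.comp_hasDerivAt 0 h1
    rw [hvs] at h2
    have h3 := (((hasDerivAt_comp_sq ha (s ^ 2)).add ((hasDerivAt_comp_sq hb (s ^ 2)).const_mul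
      s)).add ((hasDerivAt_id (0 : ℝ)).mul (hasDerivAt_comp_sq hc (s ^ 2)))).add
      (((hasDerivAt_id (0 : ℝ)).const_mul s).mul (hasDerivAt_comp_sq hd (s ^ 2)))
    have h4 := (h3.congr_of_eventuallyEq (f₁ := fun t => h (s, t)) hs).unique h2
    simpa using h4
  have hneg : Tendsto (fun s : ℝ => -s) (𝓝 0) (𝓝 0) :=
    Continuous.tendsto' (by fun_prop) _ _ (by simp)
  refine ⟨?_, eventually_eq_zero_of_ne
    (hd.continuous.comp (by fun_prop : Continuous fun s : ℝ => ((s ^ 2, 0) : R2))).continuousAt ?_⟩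
  · filter_upwards [key, hneg.eventually key] with s h1 h2
    rw [neg_sq] at h2
    linarith
  · filter_upwards [key, hneg.eventually key] with s h1 h2 hs
    rw [neg_sq] at h2
    exact (mul_eq_zero.1 (by linarith : s * d (s ^ 2, 0) = 0)).resolve_left hs

theorem exists_eq_sq_mul_of_snd {g : R2 → ℝ} (hg : ContDiff ℝ ∞ g)
    (h : ∀ᶠ s in 𝓝 (0 : ℝ), g (s ^ 2, 0) = 0) : ∃ k : R2 → ℝ, ContDiff ℝ ∞ k ∧
      ∀ᶠ q in 𝓝 (0 : R2), g (q.1 ^ 2, q.2 ^ 2) = q.2 ^ 2 * k (q.1 ^ 2, q.2 ^ 2) := by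
  obtain ⟨k, hk, hgk⟩ := exists_eventually_eq_add_mul g hg 0
  refine ⟨k, hk, ?_⟩
  have h1 : Tendsto (fun q : R2 => q.1) (𝓝 0) (𝓝 0) := Continuous.tendsto' (by fun_prop) _ _ rfl
  filter_upwards [tendsto_sq_sq.eventually hgk, h1.eventually h] with q h2 h3
  rw [h2, h3, zero_add]

theorem exists_eq_sq_mul_of_fst {g : R2 → ℝ} (hg : ContDiff ℝ ∞ g)
    (h : ∀ᶠ s in 𝓝 (0 : ℝ), g (0, s ^ 2) = 0) : ∃ k : R2 → ℝ, ContDiff ℝ ∞ k ∧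
      ∀ᶠ q in 𝓝 (0 : R2), g (q.1 ^ 2, q.2 ^ 2) = q.1 ^ 2 * k (q.1 ^ 2, q.2 ^ 2) := by
  obtain ⟨k, hk, hgk⟩ := exists_eq_sq_mul_of_snd (g := g ∘ Prod.swap) (hg.comp contDiff_prodSwap) h
  exact ⟨k ∘ Prod.swap, hk.comp contDiff_prodSwap, tendsto_swap_zero.eventually hgk⟩

/-- The leading odd coefficient on an axis can be read off from the restriction to the axis. -/
theorem coeff_ne_zero_of_axis {h : ℝ → ℝ} {A B P : ℝ → ℝ} (hB : ContinuousAt B 0)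
    (hP : ContinuousAt P 0) (hP0 : P 0 ≠ 0) (h1 : ∀ᶠ s in 𝓝 (0 : ℝ), h s = s ^ 3 * P s)
    (h2 : ∀ᶠ s in 𝓝 (0 : ℝ), h s = A (s ^ 2) + s ^ 3 * B (s ^ 2)) : B 0 ≠ 0 := by
  have hneg : Tendsto (fun s : ℝ => -s) (𝓝 0) (𝓝 0) :=
    Continuous.tendsto' (by fun_prop) _ _ (by simp)
  have hsq : Tendsto (fun s : ℝ => s ^ 2) (𝓝 0) (𝓝 0) :=
    Continuous.tendsto' (by fun_prop) _ _ (by simp)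
  have hc : ContinuousAt (fun s => 2 * B (s ^ 2) - (P s + P (-s))) 0 := by
    have e1 : ContinuousAt (fun s : ℝ => B (s ^ 2)) 0 :=
      ContinuousAt.comp (by simpa using hB) (by fun_prop)
    have e2 : ContinuousAt (fun s : ℝ => P (-s)) 0 :=
      ContinuousAt.comp (by simpa using hP) (by fun_prop)
    exact (e1.const_mul 2).sub (hP.add e2)
  have h3 := (eventually_eq_zero_of_ne hc (by
    filter_upwards [h1, h2, hneg.eventually h1, hneg.eventually h2] with s e1 e2 e3 e4 hs
    rw [neg_sq] at e4
    have : s ^ 3 * (2 * B (s ^ 2) - (P s + P (-s))) = 0 := by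
      linear_combination e1 - e2 - e3 + e4
    exact (mul_eq_zero.1 this).resolve_left (by positivity))).self_of_nhds
  intro h0
  simp [h0] at h3
  exact hP0 (by linarith)

theorem aEquiv_sumOfCusps_of_singular_axes {f : R2 → R3} {h : R2 → ℝ} (hh : ContDiff ℝ ∞ h)
    (hf : ∀ᶠ q in 𝓝 (0 : R2), f q = (q.1 ^ 2, q.2 ^ 2, h q))
    (hv : ∀ᶠ s in 𝓝 (0 : ℝ), fderiv ℝ h (s, 0) (0, 1) = 0)
    (hu : ∀ᶠ t in 𝓝 (0 : ℝ), fderiv ℝ (h ∘ Prod.swap) (t, 0) (0, 1) = 0)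
    {P Q : ℝ → ℝ} (hP : ContinuousAt P 0) (hP0 : P 0 ≠ 0)
    (hhP : ∀ᶠ s in 𝓝 (0 : ℝ), h (s, 0) = s ^ 3 * P s)
    (hQ : ContinuousAt Q 0) (hQ0 : Q 0 ≠ 0)
    (hhQ : ∀ᶠ t in 𝓝 (0 : ℝ), h (0, t) = t ^ 3 * Q t) :
    AEquiv f 0 sumOfCusps 0 := by
  obtain ⟨a, b, c, d, ha, hb, hc, hd, hW⟩ := exists_eventually_eq_even_odd
    (h := h) (.of_forall fun _ => hh.contDiffAt)
  replace hW : ∀ᶠ q in 𝓝 (0 : R2), _ := hW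
  obtain ⟨hc0, hd0⟩ := eventually_odd_parts_eq_zero hh ha hb hc hd hW hv
  obtain ⟨hb0, hd0'⟩ := eventually_odd_parts_eq_zero (hh.comp contDiff_prodSwap)
    (ha.comp contDiff_prodSwap) (hc.comp contDiff_prodSwap) (hb.comp contDiff_prodSwap)
    (hd.comp contDiff_prodSwap) (by
      filter_upwards [tendsto_swap_zero.eventually hW] with q hq
      simp only [Function.comp, hq, Prod.swap_prod_mk, Prod.fst_swap, Prod.snd_swap]
      ring) hu
  simp only [Function.comp, Prod.swap_prod_mk] at hb0 hd0'
  obtain ⟨b1, hb1, hbb⟩ := exists_eq_sq_mul_of_fst hb hb0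
  obtain ⟨c1, hc1, hcc⟩ := exists_eq_sq_mul_of_snd hc hc0
  obtain ⟨d1, hd1, hdd⟩ := exists_eq_sq_mul_of_snd hd hd0
  obtain ⟨e, he, hde⟩ := exists_eq_sq_mul_of_fst hd1 (eventually_eq_zero_of_ne
    (hd1.continuous.comp (by fun_prop : Continuous fun s : ℝ => ((0, s ^ 2) : R2))).continuousAt (by
      filter_upwards [hd0', (tendsto_swap_zero.comp tendsto_mk_zero).eventually hdd] with t h1 h2 ht
      simp [h1] at h2
      exact h2.resolve_left ht))
  have hall : ∀ᶠ q in 𝓝 (0 : R2), h q = a (q.1 ^ 2, q.2 ^ 2) +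
      q.1 ^ 3 * b1 (q.1 ^ 2, q.2 ^ 2) + q.2 ^ 3 * c1 (q.1 ^ 2, q.2 ^ 2) +
      q.1 ^ 3 * q.2 ^ 3 * e (q.1 ^ 2, q.2 ^ 2) := by
    filter_upwards [hW, hbb, hcc, hdd, hde] with q h1 h2 h3 h4 h5
    rw [h1, h2, h3, h4, h5]
    ring
  refine aEquiv_sumOfCusps_of_even_odd ha hb1 hc1 he ?_ ?_ (by
    filter_upwards [hf, hall] with q h1 h2
    rw [h1, h2])
  · refine coeff_ne_zero_of_axis (A := fun x => a (x, 0)) (B := fun x => b1 (x, 0))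
      (hb1.continuous.comp (by fun_prop)).continuousAt hP hP0 hhP ?_
    filter_upwards [tendsto_mk_zero.eventually hall] with s hs
    simpa using hs
  · refine coeff_ne_zero_of_axis (A := fun x => a (0, x)) (B := fun x => c1 (0, x))
      (hc1.continuous.comp (by fun_prop)).continuousAt hQ hQ0 hhQ ?_
    filter_upwards [(tendsto_swap_zero.comp tendsto_mk_zero).eventually hall] with s hs
    simpa using hs

theorem hasDerivAt_mul_of_continuousAt {m : ℝ → ℝ} (hm : ContinuousAt m 0) :
    HasDerivAt (fun t => t * m t) (m 0) 0 := by
  rw [hasDerivAt_iff_tendsto_slope]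
  refine (hm.tendsto.mono_left nhdsWithin_le_nhds).congr' ?_
  filter_upwards [self_mem_nhdsWithin] with t ht
  rw [slope_def_field]
  field_simp [show t ≠ 0 from ht]
  simp

theorem exists_eventually_eq_even_add_odd {g : ℝ → ℝ} (hg : ContDiff ℝ ∞ g) :
    ∃ a b : ℝ → ℝ, ContDiff ℝ ∞ a ∧ ContDiff ℝ ∞ b ∧
      ∀ᶠ s in 𝓝 (0 : ℝ), g s = a (s ^ 2) + s * b (s ^ 2) := by
  obtain ⟨a, b, c, d, ha, hb, -, -, h⟩ := exists_eventually_eq_even_odd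
    (h := fun q => g q.1) (.of_forall fun _ => (hg.comp contDiff_fst).contDiffAt)
  refine ⟨fun x => a (x, 0), fun x => b (x, 0), ha.comp (by fun_prop), hb.comp (by fun_prop), ?_⟩
  filter_upwards [tendsto_mk_zero.eventually h] with s hs
  simpa using hs

/-- Elimination of a cubic term along a plane cusp. -/
theorem exists_cusp_relation {β κ ζ : ℝ → ℝ} (hβ : ContDiff ℝ ∞ β) (hκ : ContDiff ℝ ∞ κ)
    (hζ : ContDiff ℝ ∞ ζ) (hκ0 : κ 0 = 1) (hζ0 : ζ 0 ≠ 0) :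
    ∃ P Q : ℝ → ℝ, ContDiff ℝ ∞ P ∧ ContDiff ℝ ∞ Q ∧ ∀ᶠ v in 𝓝 (0 : ℝ),
      v ^ 3 * β v = (v ^ 2 * κ v) ^ 2 * P (v ^ 2 * κ v) + Q (v ^ 2 * κ v) * (v ^ 3 * ζ v) := by
  obtain ⟨r, hr, hr0, hrκ⟩ := exists_contDiff_pow_eq hκ (x₀ := 0) (by simp [hκ0]) two_ne_zero
  obtain ⟨b, hb, hbβ⟩ := exists_contDiff_mul_eq hβ (hr.pow 3) (x₀ := 0) (by positivity)
  obtain ⟨z, hz, hzζ⟩ := exists_contDiff_mul_eq hζ (hr.pow 3) (x₀ := 0) (by positivity)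
  have hder : HasDerivAt (fun v => v * r v) (r 0) 0 :=
    hasDerivAt_mul_of_continuousAt hr.continuous.continuousAt
  have hloc : IsLocalDiffeoAt (fun v => v * r v) 0 := by
    refine isLocalDiffeoAt_of_injective (.of_forall fun _ => (contDiff_id.mul hr).contDiffAt) ?_
    rw [hder.hasFDerivAt.fderiv]
    intro x y hxy
    simpa [hr0.ne'] using hxy
  obtain ⟨η, hη, hη0, hηl, -⟩ := hloc.exists_inverse
  rw [zero_mul] at hη0
  obtain ⟨b0, b1, hb0, hb1, hbe⟩ := exists_eventually_eq_even_add_odd (hb.comp hη)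
  obtain ⟨z0, z1, hz0, hz1, hze⟩ := exists_eventually_eq_even_add_odd (hz.comp hη)
  have hz00 : z0 0 ≠ 0 := by
    have h1 := hze.self_of_nhds
    have h2 := hzζ.self_of_nhds
    simp only [Function.comp, hη0] at h1
    intro h0
    simp [h0] at h1
    simp [h1] at h2
    exact hζ0 h2.symm
  obtain ⟨Q, hQ, hQe⟩ := exists_contDiff_mul_eq hb0 hz0 hz00
  refine ⟨fun x => b1 x - Q x * z1 x, Q, hb1.sub (hQ.mul hz1), hQ, ?_⟩
  have ht : Tendsto (fun v => v * r v) (𝓝 0) (𝓝 0) :=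
    (continuous_id.mul hr.continuous).tendsto' _ _ (by simp)
  have hsq : Tendsto (fun v => (v * r v) ^ 2) (𝓝 0) (𝓝 0) :=
    ((continuous_id.mul hr.continuous).pow 2).tendsto' _ _ (by simp)
  filter_upwards [hrκ, hbβ, hzζ, hηl, ht.eventually hbe, ht.eventually hze, hsq.eventually hQe]
    with v e1 e2 e3 e4 e5 e6 e7
  simp only [Function.comp, e4] at e5 e6
  have e8 : v ^ 2 * κ v = (v * r v) ^ 2 := by rw [mul_pow, e1]
  rw [← e2, ← e3, e8, e5, e6, ← e7]
  ring

theorem hasDerivAt_sq_smul {b : ℝ → R3} (hb : ContDiff ℝ ∞ b) :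
    HasDerivAt (fun t => t ^ 2 • b t) 0 0 := by
  have h : HasDerivAt (fun t => t ^ 2 • b t) _ 0 :=
    (hasDerivAt_pow 2 (0 : ℝ)).smul (hb.differentiable (by simp) 0).hasDerivAt
  simpa using h

/-- A function vanishing along the curve `B` is divisible by `u ^ 2` on `u ^ 2 • a u + B v`. -/
theorem exists_eq_sq_mul_of_comp_eq_zero {K : R3 → ℝ} (hK : ContDiff ℝ ∞ K) {a B : ℝ → R3}
    (ha : ContDiff ℝ ∞ a) (hB : ContDiff ℝ ∞ B) (hB0 : B 0 = 0)
    (hKB : ∀ᶠ v in 𝓝 (0 : ℝ), K (B v) = 0) {c : ℝ}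
    (hc : HasDerivAt (fun s : ℝ => K (s • a 0)) c 0) :
    ∃ k : R2 → ℝ, ContDiff ℝ ∞ k ∧ k 0 = c ∧
      ∀ᶠ q in 𝓝 (0 : R2), K (q.1 ^ 2 • a q.1 + B q.2) = q.1 ^ 2 * k q := by
  obtain ⟨k, hk, hke⟩ := exists_eventually_eq_add_mul
    (fun q : R2 × ℝ => K (q.2 • a q.1.1 + B q.1.2))
    (hK.comp ((contDiff_snd.smul (ha.comp (contDiff_fst.comp contDiff_fst))).add
      (hB.comp (contDiff_snd.comp contDiff_fst)))) 0
  refine ⟨fun q => k (q, q.1 ^ 2), hk.comp (by fun_prop), ?_, ?_⟩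
  · have h1 : Tendsto (fun s : ℝ => ((0 : R2), s)) (𝓝 0) (𝓝 (0, 0)) :=
      Continuous.tendsto' (by fun_prop) _ _ rfl
    have h2 := hasDerivAt_mul_of_continuousAt (m := fun s => k (0, s))
      (hk.continuous.comp (by fun_prop)).continuousAt
    have h3 := h2.congr_of_eventuallyEq (f₁ := fun s : ℝ => K (s • a 0)) (by
      filter_upwards [h1.eventually hke] with s hs
      simpa [hB0, hKB.self_of_nhds, show K 0 = 0 by simpa [hB0] using hKB.self_of_nhds] using hs)
    simpa using h3.unique hc
  · have h1 : Tendsto (fun q : R2 => (q, q.1 ^ 2)) (𝓝 0) (𝓝 (0, 0)) :=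
      Continuous.tendsto' (by fun_prop) _ _ (by simp)
    have h2 : Tendsto (fun q : R2 => q.2) (𝓝 0) (𝓝 0) := Continuous.tendsto' (by fun_prop) _ _ rfl
    filter_upwards [h1.eventually hke, h2.eventually hKB] with q e1 e2
    simpa [e2] using e1

theorem singular_axis_of_comp {r1 r2 : R2 → ℝ} (hr1 : ContDiff ℝ ∞ r1) (hr2 : ContDiff ℝ ∞ r2)
    (h10 : r1 0 ≠ 0) (h20 : r2 0 ≠ 0) {K : R3 → ℝ} (hK : ContDiff ℝ ∞ K) {A B : ℝ → R3}
    (hB : HasDerivAt B 0 0)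
    (hKr : ∀ᶠ q in 𝓝 (0 : R2), K (A q.1 + B q.2) = (q.1 * r1 q) ^ 2)
    {Z : R2 → ℝ} {ζ : ℝ → ℝ} (hZ : ContDiff ℝ ∞ Z)
    (hZv : ∀ u : ℝ, HasDerivAt (fun t => Z (u, t)) 0 0) (hZu : ∀ u, Z (u, 0) = u ^ 3 * ζ u)
    (hζ : Continuous ζ) (hζ0 : ζ 0 ≠ 0) {η : R2 → R2} (hη : ContDiff ℝ ∞ η) (hη0 : η 0 = 0)
    (hl : ∀ᶠ q in 𝓝 (0 : R2), η (q.1 * r1 q, q.2 * r2 q) = q)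
    (hr : ∀ᶠ y in 𝓝 (0 : R2), ((η y).1 * r1 (η y), (η y).2 * r2 (η y)) = y) :
    (∀ᶠ s in 𝓝 (0 : ℝ), fderiv ℝ (Z ∘ η) (s, 0) (0, 1) = 0) ∧
      ∃ P : ℝ → ℝ, ContinuousAt P 0 ∧ P 0 ≠ 0 ∧
        ∀ᶠ s in 𝓝 (0 : ℝ), (Z ∘ η) (s, 0) = s ^ 3 * P s := by
  have hη' : Tendsto η (𝓝 0) (𝓝 0) := hη.continuous.tendsto' _ _ hη0
  have n1 : ∀ᶠ q in 𝓝 (0 : R2), r1 q ≠ 0 := hr1.continuous.continuousAt.eventually_ne h10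
  have n2 : ∀ᶠ q in 𝓝 (0 : R2), r2 q ≠ 0 := hr2.continuous.continuousAt.eventually_ne h20
  have hs0 : ∀ᶠ s in 𝓝 (0 : ℝ), (η (s, 0)).2 = 0 ∧ (η (s, 0)).1 * r1 (η (s, 0)) = s := by
    filter_upwards [tendsto_mk_zero.eventually hr,
      (hη'.comp tendsto_mk_zero).eventually n2] with s e1 e2
    simp only [Prod.mk.injEq] at e1
    exact ⟨(mul_eq_zero.1 e1.2).resolve_right e2, e1.1⟩
  have hη1 : Tendsto (fun s : ℝ => (η (s, 0)).1) (𝓝 0) (𝓝 0) :=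
    (continuous_fst.tendsto' _ _ rfl).comp (hη'.comp tendsto_mk_zero)
  refine ⟨?_, fun s => ζ (η (s, 0)).1 / r1 (η (s, 0)) ^ 3, ?_, ?_, ?_⟩
  · have hu : ∀ᶠ u in 𝓝 (0 : ℝ), fderiv ℝ (Z ∘ η) (u * r1 (u, 0), 0) (0, 1) = 0 := by
      have hl' : ∀ᶠ q in 𝓝 ((0 : ℝ), (0 : ℝ)), _ := hl
      have hKr' : ∀ᶠ q in 𝓝 ((0 : ℝ), (0 : ℝ)), _ := hKr
      filter_upwards [hl'.curry_nhds, hKr'.curry_nhds, tendsto_mk_zero.eventually n1,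
        tendsto_mk_zero.eventually n2] with u e1 e2 e3 e4
      have hline : HasDerivAt (fun t : ℝ => (u, t)) ((0 : ℝ), (1 : ℝ)) 0 :=
        (hasDerivAt_const _ _).prodMk (hasDerivAt_id _)
      have d1 := ((hr1.differentiable (by simp) (u, 0)).hasFDerivAt.comp_hasDerivAt
        0 hline).const_mul u
      have d2 : HasDerivAt (fun t : ℝ => t * r2 (u, t)) (r2 (u, 0)) 0 :=
        hasDerivAt_mul_of_continuousAt (hr2.continuous.comp (by fun_prop)).continuousAt
      have d3 : u * fderiv ℝ r1 (u, 0) (0, 1) = 0 := by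
        have d4 := (d1.pow 2).congr_of_eventuallyEq (f₁ := fun t => K (A u + B t)) e2
        have d5 := (hK.differentiable (by simp) (A u + B 0)).hasFDerivAt.comp_hasDerivAt 0
          (hB.const_add (A u))
        have d6 := d4.unique d5
        rw [map_zero] at d6
        by_cases h0 : u = 0
        · simp [h0]
        · simpa [h0, e3] using d6
      rw [d3] at d1
      have d7 := ((hZ.comp hη).differentiable (by simp)
        (u * r1 (u, 0), 0 * r2 (u, 0))).hasFDerivAt.comp_hasDerivAt (0 : ℝ) (d1.prodMk d2)
      have d8 := ((hZv u).congr_of_eventuallyEq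
        (f₁ := fun t => (Z ∘ η) (u * r1 (u, t), t * r2 (u, t))) (by
          filter_upwards [e1] with t ht
          simp only [Function.comp]
          rw [ht])).unique d7
      rw [zero_mul, show ((0 : ℝ), r2 (u, 0)) = r2 (u, 0) • ((0 : ℝ), (1 : ℝ)) by simp,
        map_smul, smul_eq_mul] at d8
      exact (mul_eq_zero.1 d8.symm).resolve_left e4
    filter_upwards [hη1.eventually hu, hs0] with s e1 e2
    have e3 : ((η (s, 0)).1, (0 : ℝ)) = η (s, 0) := Prod.ext rfl e2.1.symm
    rwa [e3, e2.2] at e1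
  · refine ContinuousAt.div ?_ ?_ ?_
    · exact (hζ.comp (continuous_fst.comp (hη.continuous.comp (by fun_prop)))).continuousAt
    · exact ((hr1.continuous.comp (hη.continuous.comp (by fun_prop))).pow 3).continuousAt
    · simpa [hη0, show ((0 : ℝ), (0 : ℝ)) = 0 from rfl] using h10
  · simp [hη0, show ((0 : ℝ), (0 : ℝ)) = 0 from rfl, h10, hζ0]
  · filter_upwards [hs0, (hη'.comp tendsto_mk_zero).eventually n1] with s e1 e2
    have e3 : η (s, 0) = ((η (s, 0)).1, (0 : ℝ)) := Prod.ext rfl e1.1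
    have e4 : Z (η (s, 0)) = (η (s, 0)).1 ^ 3 * ζ (η (s, 0)).1 := by rw [← hZu, ← e3]
    have e5 : r1 (η (s, 0)) ≠ 0 := e2
    rw [Function.comp, e4]
    nth_rewrite 3 [← e1.2]
    field_simp

theorem isLocalDiffeoAt_sub_cusps {P1 Q1 P2 Q2 : ℝ → ℝ} (hP1 : ContDiff ℝ ∞ P1)
    (hQ1 : ContDiff ℝ ∞ Q1) (hP2 : ContDiff ℝ ∞ P2) (hQ2 : ContDiff ℝ ∞ Q2) :
    IsLocalDiffeoAt (fun w : R3 => (w.1 - w.2.1 ^ 2 * P2 w.2.1 - Q2 w.2.1 * w.2.2,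
      w.2.1 - w.1 ^ 2 * P1 w.1 - Q1 w.1 * w.2.2, w.2.2)) 0 := by
  have hsm : ContDiff ℝ ∞ (fun w : R3 => (w.1 - w.2.1 ^ 2 * P2 w.2.1 - Q2 w.2.1 * w.2.2,
      w.2.1 - w.1 ^ 2 * P1 w.1 - Q1 w.1 * w.2.2, w.2.2)) := by
    fun_prop
  refine isLocalDiffeoAt_of_injective (.of_forall fun _ => hsm.contDiffAt) ?_
  refine (injective_iff_map_eq_zero _).2 fun w hw => ?_
  have hline : HasDerivAt (fun t : ℝ => t • w) w 0 := by
    simpa using (hasDerivAt_id (0 : ℝ)).smul_const w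
  have h0 := (hsm.differentiable (by simp) ((0 : ℝ) • w)).hasFDerivAt.comp_hasDerivAt 0 hline
  rw [zero_smul, hw] at h0
  have key : ∀ (x y z : ℝ) {P Q : ℝ → ℝ}, ContDiff ℝ ∞ P → ContDiff ℝ ∞ Q →
      HasDerivAt (fun t : ℝ => t * x - (t * y) ^ 2 * P (t * y) - Q (t * y) * (t * z))
        (x - Q 0 * z) 0 := by
    intro x y z P Q hP hQ
    have h1 := hasDerivAt_mul_of_continuousAt
      (m := fun t => x - t * y ^ 2 * P (t * y) - Q (t * y) * z) (by
        have := hP.continuous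
        have := hQ.continuous
        fun_prop)
    simp only [zero_mul, sub_zero] at h1
    exact h1.congr_of_eventuallyEq (.of_forall fun t => by ring)
  have h1 := (key w.1 w.2.1 w.2.2 hP2 hQ2).prodMk ((key w.2.1 w.1 w.2.2 hP1 hQ1).prodMk
    (hasDerivAt_mul_of_continuousAt (m := fun _ => w.2.2) continuousAt_const))
  have h2 := h1.unique h0
  simp only [Prod.ext_iff, Prod.fst_zero, Prod.snd_zero] at h2
  obtain ⟨e1, e2, e3⟩ := h2
  rw [e3] at e1 e2
  exact Prod.ext (by simpa using e1) (Prod.ext (by simpa using e2) e3)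

theorem aEquiv_sumOfCusps_of_add_cusps {f : R2 → R3} {β₁ κ₁ ζ₁ β₂ κ₂ ζ₂ : ℝ → ℝ}
    (hβ₁ : ContDiff ℝ ∞ β₁) (hκ₁ : ContDiff ℝ ∞ κ₁) (hζ₁ : ContDiff ℝ ∞ ζ₁)
    (hβ₂ : ContDiff ℝ ∞ β₂) (hκ₂ : ContDiff ℝ ∞ κ₂) (hζ₂ : ContDiff ℝ ∞ ζ₂)
    (hκ₁0 : κ₁ 0 = 1) (hζ₁0 : ζ₁ 0 ≠ 0) (hκ₂0 : κ₂ 0 = 1) (hζ₂0 : ζ₂ 0 ≠ 0)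
    (hf : ∀ᶠ q in 𝓝 (0 : R2), f q = (q.1 ^ 2 * κ₁ q.1 + q.2 ^ 3 * β₂ q.2,
      q.1 ^ 3 * β₁ q.1 + q.2 ^ 2 * κ₂ q.2, q.1 ^ 3 * ζ₁ q.1 + q.2 ^ 3 * ζ₂ q.2)) :
    AEquiv f 0 sumOfCusps 0 := by
  obtain ⟨P1, Q1, hP1, hQ1, h1⟩ := exists_cusp_relation hβ₁ hκ₁ hζ₁ hκ₁0 hζ₁0
  obtain ⟨P2, Q2, hP2, hQ2, h2⟩ := exists_cusp_relation hβ₂ hκ₂ hζ₂ hκ₂0 hζ₂0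
  set a : ℝ → R3 := fun u => (κ₁ u, u * β₁ u, u * ζ₁ u) with ha'
  set b : ℝ → R3 := fun v => (v * β₂ v, κ₂ v, v * ζ₂ v) with hb'
  set K1 : R3 → ℝ := fun w => w.1 - w.2.1 ^ 2 * P2 w.2.1 - Q2 w.2.1 * w.2.2 with hK1'
  set K2 : R3 → ℝ := fun w => w.2.1 - w.1 ^ 2 * P1 w.1 - Q1 w.1 * w.2.2 with hK2'
  set Z : R2 → ℝ := fun q => q.1 ^ 3 * ζ₁ q.1 + q.2 ^ 3 * ζ₂ q.2 with hZ'
  have ha : ContDiff ℝ ∞ a := by fun_prop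
  have hb : ContDiff ℝ ∞ b := by fun_prop
  have hK1 : ContDiff ℝ ∞ K1 := by fun_prop
  have hK2 : ContDiff ℝ ∞ K2 := by fun_prop
  have hZ : ContDiff ℝ ∞ Z := by fun_prop
  have hA : ContDiff ℝ ∞ fun t => t ^ 2 • a t := by fun_prop
  have hB : ContDiff ℝ ∞ fun t => t ^ 2 • b t := by fun_prop
  obtain ⟨k1, hk1, hk10, hk1e⟩ := exists_eq_sq_mul_of_comp_eq_zero hK1 ha hB (by simp)
    (c := 1) (by
      filter_upwards [h2] with v hv
      simp only [hK1', hb', Prod.smul_mk, smul_eq_mul]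
      linear_combination hv) (by simpa [hK1', ha', hκ₁0] using hasDerivAt_id' (0 : ℝ))
  obtain ⟨k2, hk2, hk20, hk2e⟩ := exists_eq_sq_mul_of_comp_eq_zero hK2 hb hA (by simp)
    (c := 1) (by
      filter_upwards [h1] with v hv
      simp only [hK2', ha', Prod.smul_mk, smul_eq_mul]
      linear_combination hv) (by simpa [hK2', hb', hκ₂0] using hasDerivAt_id' (0 : ℝ))
  obtain ⟨r1, hr1, hr10, hr1e⟩ := exists_contDiff_pow_eq hk1 (x₀ := 0) (by simp [hk10]) two_ne_zero
  obtain ⟨r2, hr2, hr20, hr2e⟩ := exists_contDiff_pow_eq hk2 (x₀ := 0) (by simp [hk20]) two_ne_zero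
  have hr2s : ContDiff ℝ ∞ (r2 ∘ Prod.swap) := hr2.comp contDiff_prodSwap
  have hθ := isLocalDiffeoAt_mul_mul hr1 hr2s hr10.ne' (show r2 (Prod.swap 0) ≠ 0 from hr20.ne')
  obtain ⟨η, hη, hη0, hl, hr⟩ := hθ.exists_inverse
  have hθ0 : ((0 : R2).1 * r1 0, (0 : R2).2 * (r2 ∘ Prod.swap) 0) = (0 : R2) := by simp
  rw [hθ0] at hη0 hr
  have hKr1 : ∀ᶠ q in 𝓝 (0 : R2), K1 (q.1 ^ 2 • a q.1 + q.2 ^ 2 • b q.2) = (q.1 * r1 q) ^ 2 := by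
    filter_upwards [hk1e, hr1e] with q e1 e2
    rw [e1, mul_pow, e2]
  have hKr2 : ∀ᶠ q in 𝓝 (0 : R2), K2 (q.1 ^ 2 • b q.1 + q.2 ^ 2 • a q.2) = (q.1 * r2 q) ^ 2 := by
    filter_upwards [hk2e, hr2e] with q e1 e2
    rw [e1, mul_pow, e2]
  have hcub : ∀ (c : ℝ) {ζ : ℝ → ℝ}, ContDiff ℝ ∞ ζ →
      HasDerivAt (fun t => c + t ^ 3 * ζ t) 0 0 := by
    intro c ζ hζ
    have h : HasDerivAt (fun t => t * (t ^ 2 * ζ t)) _ 0 := hasDerivAt_mul_of_continuousAt (by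
      have := hζ.continuous
      fun_prop)
    exact (by simpa using h.const_add c : HasDerivAt (fun t => c + t * (t ^ 2 * ζ t)) 0 0)
      |>.congr_of_eventuallyEq (.of_forall fun t => by ring)
  obtain ⟨hv, P, hPc, hP0, hP⟩ := singular_axis_of_comp hr1 hr2s hr10.ne' hr20.ne' hK1
    (A := fun t => t ^ 2 • a t) (hasDerivAt_sq_smul hb) hKr1 (ζ := ζ₁) hZ
    (fun u => hcub (u ^ 3 * ζ₁ u) hζ₂) (fun u => by simp [hZ'])
    hζ₁.continuous hζ₁0 hη hη0 hl hr
  obtain ⟨hu, Q, hQc, hQ0, hQ⟩ := singular_axis_of_comp hr2 (hr1.comp contDiff_prodSwap)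
    hr20.ne' hr10.ne' hK2
    (A := fun t => t ^ 2 • b t) (hasDerivAt_sq_smul ha) hKr2 (Z := Z ∘ Prod.swap) (ζ := ζ₂)
    (hZ.comp contDiff_prodSwap)
    (fun u => (hcub (u ^ 3 * ζ₂ u) hζ₁).congr_of_eventuallyEq
      (.of_forall fun t => by simp [hZ', add_comm]))
    (fun u => by simp [hZ'])
    hζ₂.continuous hζ₂0 (η := Prod.swap ∘ η ∘ Prod.swap)
    (contDiff_prodSwap.comp (hη.comp contDiff_prodSwap)) (by simp [hη0])
    (by
      filter_upwards [tendsto_swap_zero.eventually hl] with q hq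
      simpa using congrArg Prod.swap hq)
    (by
      filter_upwards [tendsto_swap_zero.eventually hr] with q hq
      simpa using congrArg Prod.swap hq)
  have hf0 : f 0 = 0 := hf.self_of_nhds.trans (by simp)
  have hΨ : IsLocalDiffeoAt (fun w : R3 => (K1 w, K2 w, w.2.2)) (f 0) := by
    rw [hf0]
    exact isLocalDiffeoAt_sub_cusps hP1 hQ1 hP2 hQ2
  have step1 : AEquiv f 0 (fun q => ((q.1 * r1 q) ^ 2, (q.2 * r2 q.swap) ^ 2, Z q)) 0 := by
    refine AEquiv.of_target hΨ ?_
    filter_upwards [hf, hKr1, tendsto_swap_zero.eventually hKr2] with q e1 e2 e3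
    have e4 : f q = q.1 ^ 2 • a q.1 + q.2 ^ 2 • b q.2 := by
      rw [e1]
      simp only [ha', hb', Prod.smul_mk, Prod.mk_add_mk, smul_eq_mul, Prod.mk.injEq]
      exact ⟨by ring, by ring, by ring⟩
    rw [Prod.fst_swap, Prod.snd_swap, add_comm] at e3
    simp only [e4, e2, e3]
    rw [← e4, e1]
  have step2 : AEquiv (fun q : R2 => ((q.1 * r1 q) ^ 2, (q.2 * r2 q.swap) ^ 2, Z q)) 0
      (fun y => (y.1 ^ 2, y.2 ^ 2, (Z ∘ η) y)) 0 := by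
    refine AEquiv.of_source hθ hθ0 ?_
    filter_upwards [hl] with q hq
    simp only [Function.comp] at hq ⊢
    rw [hq]
  refine (step1.trans step2).trans
    (aEquiv_sumOfCusps_of_singular_axes (hZ.comp hη) (.of_forall fun _ => rfl) hv ?_ hPc hP0 hP
      hQc hQ0 ?_)
  · exact hu
  · exact hQ

theorem exists_eventually_eq_mul_of_eq_zero {F : ℝ → ℝ} (hF : ContDiff ℝ ∞ F) (h0 : F 0 = 0) :
    ∃ k : ℝ → ℝ, ContDiff ℝ ∞ k ∧ ∀ᶠ u in 𝓝 (0 : ℝ), F u = u * k u := by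
  obtain ⟨k, hk, hke⟩ := exists_eventually_eq_add_mul (fun q : ℝ × ℝ => F q.2)
    (hF.comp contDiff_snd) 0
  refine ⟨fun u => k (0, u), hk.comp (by fun_prop), ?_⟩
  have h1 : Tendsto (fun u : ℝ => ((0 : ℝ), u)) (𝓝 0) (𝓝 (0, 0)) :=
    Continuous.tendsto' (by fun_prop) _ _ rfl
  filter_upwards [h1.eventually hke] with u hu
  simpa [h0] using hu

/-- The order of vanishing rises by one under integration. -/
theorem exists_eq_pow_mul_of_hasDerivAt (n : ℕ) : ∀ {F c : ℝ → ℝ}, ContDiff ℝ ∞ F →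
    ContDiff ℝ ∞ c → F 0 = 0 → (∀ᶠ u in 𝓝 (0 : ℝ), HasDerivAt F (u ^ n * c u) u) →
    ∃ k : ℝ → ℝ, ContDiff ℝ ∞ k ∧ k 0 = c 0 / (n + 1) ∧
      ∀ᶠ u in 𝓝 (0 : ℝ), F u = u ^ (n + 1) * k u := by
  have value : ∀ (n : ℕ) {F c k : ℝ → ℝ}, ContDiff ℝ ∞ c → ContDiff ℝ ∞ k →
      (∀ᶠ u in 𝓝 (0 : ℝ), HasDerivAt F (u ^ n * c u) u) →
      (∀ᶠ u in 𝓝 (0 : ℝ), F u = u ^ (n + 1) * k u) → k 0 = c 0 / (n + 1) := by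
    intro n F c k hc hk hF hFk
    have hk' : Continuous (deriv k) := hk.continuous_deriv (by simp)
    have hcc := hc.continuous
    have hkc := hk.continuous
    have h1 := (eventually_eq_zero_of_ne
      (g := fun u => (n + 1) * k u + u * deriv k u - c u) (by fun_prop) (by
        filter_upwards [hF, hFk.eventually_nhds] with u e1 e2 hu
        have e3 : HasDerivAt (fun u => u ^ (n + 1) * k u) _ u :=
          (hasDerivAt_pow (n + 1) u).mul (hk.differentiable (by simp) u).hasDerivAt
        have e4 := e1.unique (e3.congr_of_eventuallyEq e2)
        simp only [Nat.cast_add, Nat.cast_one, Nat.add_sub_cancel] at e4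
        have e5 : u ^ n * ((n + 1) * k u + u * deriv k u - c u) = 0 := by
          rw [pow_succ] at e4
          linear_combination -e4
        exact (mul_eq_zero.1 e5).resolve_left (pow_ne_zero _ hu))).self_of_nhds
    rw [eq_div_iff (by positivity)]
    linear_combination h1
  induction n with
  | zero =>
    intro F c hF hc h0 hd
    obtain ⟨k, hk, hke⟩ := exists_eventually_eq_mul_of_eq_zero hF h0
    have hke' : ∀ᶠ u in 𝓝 (0 : ℝ), F u = u ^ (0 + 1) * k u := by simpa using hke
    exact ⟨k, hk, value 0 hc hk hd hke', hke'⟩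
  | succ n ih =>
    intro F c hF hc h0 hd
    obtain ⟨k, hk, hk0, hke⟩ := ih (c := fun u => u * c u) hF (contDiff_id.mul hc) h0 (by
      filter_upwards [hd] with u hu
      rwa [← mul_assoc, ← pow_succ])
    obtain ⟨k', hk', hke'⟩ := exists_eventually_eq_mul_of_eq_zero hk (by simpa using hk0)
    have hke2 : ∀ᶠ u in 𝓝 (0 : ℝ), F u = u ^ (n + 1 + 1) * k' u := by
      filter_upwards [hke, hke'] with u e1 e2
      rw [e1, e2, ← mul_assoc, ← pow_succ]
    exact ⟨k', hk', value (n + 1) hc hk' hd hke2, hke2⟩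

theorem apply_zero_eq_deriv {w m : ℝ → ℝ} (hm : Continuous m)
    (h : ∀ᶠ u in 𝓝 (0 : ℝ), w u = u * m u) : m 0 = deriv w 0 :=
  ((hasDerivAt_mul_of_continuousAt hm.continuousAt).congr_of_eventuallyEq h).deriv.symm

theorem exists_eq_sq_mul_of_hasDerivAt {F w h : ℝ → ℝ} (hF : ContDiff ℝ ∞ F)
    (hw : ContDiff ℝ ∞ w) (hh : ContDiff ℝ ∞ h) (hF0 : F 0 = 0) (hw0 : w 0 = 0)
    (hd : ∀ u, HasDerivAt F (w u * h u) u) :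
    ∃ k : ℝ → ℝ, ContDiff ℝ ∞ k ∧ k 0 = deriv w 0 * h 0 / 2 ∧
      ∀ᶠ u in 𝓝 (0 : ℝ), F u = u ^ 2 * k u := by
  obtain ⟨m, hm, hme⟩ := exists_eventually_eq_mul_of_eq_zero hw hw0
  obtain ⟨k, hk, hk0, hke⟩ := exists_eq_pow_mul_of_hasDerivAt 1 (c := fun u => m u * h u) hF
    (hm.mul hh) hF0 (by
      filter_upwards [hme] with u hu
      rw [pow_one, ← mul_assoc, ← hu]
      exact hd u)
  refine ⟨k, hk, ?_, hke⟩
  rw [hk0, apply_zero_eq_deriv hm.continuous hme]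
  norm_num

theorem exists_eq_cube_mul_of_hasDerivAt {F w h : ℝ → ℝ} (hF : ContDiff ℝ ∞ F)
    (hw : ContDiff ℝ ∞ w) (hh : ContDiff ℝ ∞ h) (hF0 : F 0 = 0) (hw0 : w 0 = 0) (hh0 : h 0 = 0)
    (hd : ∀ u, HasDerivAt F (w u * h u) u) :
    ∃ k : ℝ → ℝ, ContDiff ℝ ∞ k ∧ k 0 = deriv w 0 * deriv h 0 / 3 ∧
      ∀ᶠ u in 𝓝 (0 : ℝ), F u = u ^ 3 * k u := by
  obtain ⟨m, hm, hme⟩ := exists_eventually_eq_mul_of_eq_zero hw hw0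
  obtain ⟨l, hl, hle⟩ := exists_eventually_eq_mul_of_eq_zero hh hh0
  obtain ⟨k, hk, hk0, hke⟩ := exists_eq_pow_mul_of_hasDerivAt 2 (c := fun u => m u * l u) hF
    (hm.mul hl) hF0 (by
      filter_upwards [hme, hle] with u e1 e2
      convert hd u using 1
      rw [e1, e2]
      ring)
  refine ⟨k, hk, ?_, hke⟩
  rw [hk0, apply_zero_eq_deriv hm.continuous hme, apply_zero_eq_deriv hl.continuous hle]
  norm_num

theorem aEquiv_fD4p_of_null_curves {A B : ℝ → R3} {g1 g2 w1 w2 : ℝ → ℝ} (hA : ContDiff ℝ ∞ A)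
    (hB : ContDiff ℝ ∞ B) (hg1 : ContDiff ℝ ∞ g1) (hg2 : ContDiff ℝ ∞ g2)
    (hw1 : ContDiff ℝ ∞ w1) (hw2 : ContDiff ℝ ∞ w2) (hA0 : A 0 = 0) (hB0 : B 0 = 0)
    (hA' : ∀ u, HasDerivAt A (w1 u • ((1, -g1 u ^ 2, g1 u) : R3)) u)
    (hB' : ∀ v, HasDerivAt B (w2 v • ((-g2 v ^ 2, 1, -g2 v) : R3)) v)
    (h1 : w1 0 = 0) (h2 : w2 0 = 0) (hg : g1 0 * g2 0 ≠ 1) (hg' : deriv g1 0 * deriv g2 0 ≠ 0)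
    (hw' : deriv w1 0 * deriv w2 0 ≠ 0) :
    AEquiv (fun q => A q.1 + B q.2) 0 fD4p (0, 0) := by
  have hd : 1 - g1 0 * g2 0 ≠ 0 := sub_ne_zero.2 hg.symm
  obtain ⟨hg1', hg2'⟩ := mul_ne_zero_iff.1 hg'
  obtain ⟨hw1', hw2'⟩ := mul_ne_zero_iff.1 hw'
  set c1 := 2 / (deriv w1 0 * (1 - g1 0 * g2 0)) with hc1
  set c2 := 2 / (deriv w2 0 * (1 - g1 0 * g2 0)) with hc2
  have hc10 : c1 ≠ 0 := div_ne_zero two_ne_zero (mul_ne_zero hw1' hd)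
  have hc20 : c2 ≠ 0 := div_ne_zero two_ne_zero (mul_ne_zero hw2' hd)
  have hcurve : ∀ {γ : ℝ → R3} {γ' : R3} {t : ℝ} (x y z : ℝ), HasDerivAt γ γ' t →
      HasDerivAt (fun t => x * (γ t).1 + y * (γ t).2.1 + z * (γ t).2.2)
        (x * γ'.1 + y * γ'.2.1 + z * γ'.2.2) t := by
    intro γ γ' t x y z h
    have e1 := (ContinuousLinearMap.fst ℝ ℝ R2).hasFDerivAt.comp_hasDerivAt t h
    have e2 := (ContinuousLinearMap.snd ℝ ℝ R2).hasFDerivAt.comp_hasDerivAt t h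
    have e3 := (ContinuousLinearMap.fst ℝ ℝ ℝ).hasFDerivAt.comp_hasDerivAt t e2
    have e4 := (ContinuousLinearMap.snd ℝ ℝ ℝ).hasFDerivAt.comp_hasDerivAt t e2
    exact ((e1.const_mul x).add (e3.const_mul y)).add (e4.const_mul z)
  have hpull : ∀ {γ : ℝ → R3} {w a b c : ℝ → ℝ} (x y z : ℝ) {h : ℝ → ℝ},
      (∀ t, HasDerivAt γ (w t • ((a t, b t, c t) : R3)) t) →
      (∀ t, x * a t + y * b t + z * c t = h t) →
      ∀ t, HasDerivAt (fun t => x * (γ t).1 + y * (γ t).2.1 + z * (γ t).2.2) (w t * h t) t := by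
    intro γ w a b c x y z h hγ hh t
    convert hcurve x y z (hγ t) using 1
    simp only [Prod.smul_mk, smul_eq_mul, ← hh]
    ring
  obtain ⟨κ₁, hκ₁, hκ₁0, hκ₁e⟩ := exists_eq_sq_mul_of_hasDerivAt (by fun_prop) hw1
    (h := fun u => c1 * (1 - g2 0 * g1 u)) (by fun_prop) (by simp [hA0]) h1
    (hpull c1 0 (-(c1 * g2 0)) hA' fun t => by ring)
  obtain ⟨β₁, hβ₁, -, hβ₁e⟩ := exists_eq_cube_mul_of_hasDerivAt (by fun_prop) hw1
    (h := fun u => c2 * (g1 u * (g1 0 - g1 u))) (by fun_prop) (by simp [hA0]) h1 (by simp)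
    (hpull 0 c2 (c2 * g1 0) hA' fun t => by ring)
  obtain ⟨ζ₁, hζ₁, hζ₁0, hζ₁e⟩ := exists_eq_cube_mul_of_hasDerivAt (by fun_prop) hw1
    (h := fun u => (g1 u - g1 0) * (1 - g2 0 * g1 u)) (by fun_prop) (by simp [hA0]) h1 (by simp)
    (hpull (-g1 0) (g2 0) (1 + g1 0 * g2 0) hA' fun t => by ring)
  obtain ⟨κ₂, hκ₂, hκ₂0, hκ₂e⟩ := exists_eq_sq_mul_of_hasDerivAt (by fun_prop) hw2
    (h := fun v => c2 * (1 - g1 0 * g2 v)) (by fun_prop) (by simp [hB0]) h2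
    (hpull 0 c2 (c2 * g1 0) hB' fun t => by ring)
  obtain ⟨β₂, hβ₂, -, hβ₂e⟩ := exists_eq_cube_mul_of_hasDerivAt (by fun_prop) hw2
    (h := fun v => c1 * (g2 v * (g2 0 - g2 v))) (by fun_prop) (by simp [hB0]) h2 (by simp)
    (hpull c1 0 (-(c1 * g2 0)) hB' fun t => by ring)
  obtain ⟨ζ₂, hζ₂, hζ₂0, hζ₂e⟩ := exists_eq_cube_mul_of_hasDerivAt (by fun_prop) hw2
    (h := fun v => (g2 v - g2 0) * (g1 0 * g2 v - 1)) (by fun_prop) (by simp [hB0]) h2 (by simp)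
    (hpull (-g1 0) (g2 0) (1 + g1 0 * g2 0) hB' fun t => by ring)
  have hder : ∀ {g h : ℝ → ℝ}, ContDiff ℝ ∞ g → ContDiff ℝ ∞ h →
      deriv (fun t => (g t - g 0) * h t) 0 = deriv g 0 * h 0 := by
    intro g h hg hh
    have e : HasDerivAt (fun t => (g t - g 0) * h t) _ 0 :=
      ((hg.differentiable (by simp) 0).hasDerivAt.sub_const (g 0)).mul
        (hh.differentiable (by simp) 0).hasDerivAt
    rw [e.deriv]
    ring
  rw [hder hg1 (by fun_prop)] at hζ₁0
  rw [hder hg2 (by fun_prop)] at hζ₂0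
  let T : R3 →L[ℝ] R3 := LinearMap.toContinuousLinearMap
    { toFun := fun w => (c1 * w.1 + 0 * w.2.1 + -(c1 * g2 0) * w.2.2,
        0 * w.1 + c2 * w.2.1 + c2 * g1 0 * w.2.2,
        -g1 0 * w.1 + g2 0 * w.2.1 + (1 + g1 0 * g2 0) * w.2.2)
      map_add' := fun x y => by
        simp only [Prod.fst_add, Prod.snd_add, Prod.mk_add_mk, Prod.mk.injEq]
        exact ⟨by ring, by ring, by ring⟩
      map_smul' := fun r x => by
        simp only [Prod.smul_fst, Prod.smul_snd, Prod.smul_mk, smul_eq_mul, RingHom.id_apply,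
          Prod.mk.injEq]
        exact ⟨by ring, by ring, by ring⟩ }
  have hT : ∀ w : R3, T w = (c1 * w.1 + 0 * w.2.1 + -(c1 * g2 0) * w.2.2,
        0 * w.1 + c2 * w.2.1 + c2 * g1 0 * w.2.2,
        -g1 0 * w.1 + g2 0 * w.2.1 + (1 + g1 0 * g2 0) * w.2.2) := fun _ => rfl
  have hTloc : IsLocalDiffeoAt T (A (0 : R2).1 + B (0 : R2).2) := by
    refine isLocalDiffeoAt_of_injective (.of_forall fun _ => T.contDiff.contDiffAt) ?_
    rw [T.fderiv]
    refine (injective_iff_map_eq_zero _).2 fun w hw => ?_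
    rw [hT] at hw
    simp only [Prod.ext_iff, Prod.fst_zero, Prod.snd_zero] at hw
    obtain ⟨e1, e2, e3⟩ := hw
    have f1 : w.1 = g2 0 * w.2.2 := mul_left_cancel₀ hc10 (by linear_combination e1)
    have f2 : w.2.1 = -(g1 0 * w.2.2) := mul_left_cancel₀ hc20 (by linear_combination e2)
    have f3 : w.2.2 = 0 := mul_left_cancel₀ hd (by
      rw [f1, f2] at e3
      linear_combination e3)
    rw [f3] at f1 f2
    exact Prod.ext (by simpa using f1) (Prod.ext (by simpa using f2) f3)
  have t1 : Tendsto (fun q : R2 => q.1) (𝓝 0) (𝓝 0) := Continuous.tendsto' (by fun_prop) _ _ rfl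
  have t2 : Tendsto (fun q : R2 => q.2) (𝓝 0) (𝓝 0) := Continuous.tendsto' (by fun_prop) _ _ rfl
  refine ((AEquiv.of_target (f := fun q => A q.1 + B q.2) (p := 0)
    (g := fun q => T (A q.1 + B q.2)) hTloc (.of_forall fun _ => rfl)).trans
    (aEquiv_sumOfCusps_of_add_cusps hβ₁ hκ₁ hζ₁ hβ₂ hκ₂ hζ₂ ?_ ?_ ?_ ?_ ?_)).trans
    aEquiv_sumOfCusps_fD4p
  · rw [hκ₁0, hc1, mul_comm (g2 0)]
    field_simp
  · rw [hζ₁0, mul_comm (g2 0)]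
    positivity
  · rw [hκ₂0, hc2]
    field_simp
  · rw [hζ₂0]
    have : g1 0 * g2 0 - 1 ≠ 0 := sub_ne_zero.2 hg
    positivity
  · filter_upwards [t1.eventually hκ₁e, t1.eventually hβ₁e, t1.eventually hζ₁e,
      t2.eventually hκ₂e, t2.eventually hβ₂e, t2.eventually hζ₂e] with q e1 e2 e3 e4 e5 e6
    rw [map_add, hT, hT, e1, e2, e3, e4, e5, e6]
    rfl

theorem fderiv_fD4p_zero : fderiv ℝ fD4p 0 = 0 := by
  have hsm : Differentiable ℝ fD4p := by
    unfold fD4p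
    fun_prop
  refine ContinuousLinearMap.ext fun v => ?_
  have hline : HasDerivAt (fun t : ℝ => t • v) v 0 := by
    simpa using (hasDerivAt_id (0 : ℝ)).smul_const v
  have h0 := (hsm ((0 : ℝ) • v)).hasFDerivAt.comp_hasDerivAt 0 hline
  have key : ∀ c : ℝ → ℝ, Continuous c → c 0 = 0 → HasDerivAt (fun t => t * c t) 0 0 :=
    fun c hc hc0 => by simpa [hc0] using hasDerivAt_mul_of_continuousAt hc.continuousAt
  have h1 := (key (fun t => t * (v.1 * v.2)) (by fun_prop) (by simp)).prodMk
    ((key (fun t => t * (v.1 ^ 2 + 3 * v.2 ^ 2)) (by fun_prop) (by simp)).prodMk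
      (key (fun t => t ^ 2 * (v.1 ^ 2 * v.2 + v.2 ^ 3)) (by fun_prop) (by simp)))
  have h2 := (h1.congr_of_eventuallyEq (f₁ := fun t : ℝ => fD4p (t • v)) (.of_forall fun t => by
    simp only [fD4p, Prod.smul_fst, Prod.smul_snd, smul_eq_mul, Prod.mk.injEq]
    exact ⟨by ring, by ring, by ring⟩)).unique h0
  rw [zero_smul] at h2
  exact h2.symm

/-- Second order expansion along a curve of the form `t ^ 2 • z t`. -/
theorem exists_eq_sq_mul_fderiv_add {ψ : R3 → ℝ} (hψ : ∀ᶠ y in 𝓝 (0 : R3), ContDiffAt ℝ ∞ ψ y)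
    (h0 : ψ 0 = 0) {z : ℝ → R3} (hz : ContinuousAt z 0) :
    ∃ e : ℝ → ℝ, ContinuousAt e 0 ∧
      ∀ᶠ t in 𝓝 (0 : ℝ), ψ (t ^ 2 • z t) = t ^ 2 * fderiv ℝ ψ 0 (z t) + t ^ 4 * e t := by
  obtain ⟨ψ', hψ', -, heq⟩ := exists_contDiff_hasCompactSupport_eventuallyEq hψ
  have hψ0 : ψ' 0 = 0 := heq.eq_of_nhds.trans h0
  obtain ⟨k, hk, hke⟩ := exists_eventually_eq_add_mul (fun q : R3 × ℝ => ψ' (q.2 • q.1))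
    (hψ'.comp (contDiff_snd.smul contDiff_fst)) (z 0)
  obtain ⟨k2, hk2, hk2e⟩ := exists_eventually_eq_add_mul k hk (z 0)
  have hk0 : ∀ᶠ y in 𝓝 (z 0), k (y, 0) = fderiv ℝ ψ 0 y := by
    filter_upwards [hke.curry_nhds] with y hy
    have h1 := hasDerivAt_mul_of_continuousAt (m := fun s => k (y, s))
      (hk.continuous.comp (by fun_prop)).continuousAt
    have h2 := h1.congr_of_eventuallyEq (f₁ := fun s : ℝ => ψ' (s • y)) (by
      filter_upwards [hy] with s hs
      simpa [hψ0] using hs)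
    have hline : HasDerivAt (fun t : ℝ => t • y) y 0 := by
      simpa using (hasDerivAt_id (0 : ℝ)).smul_const y
    have h3 := (hψ'.differentiable (by simp) ((0 : ℝ) • y)).hasFDerivAt.comp_hasDerivAt 0 hline
    rw [zero_smul, heq.fderiv_eq] at h3
    exact h2.unique h3
  have hzz : Tendsto (fun t : ℝ => (z t, t ^ 2)) (𝓝 0) (𝓝 (z 0, 0)) :=
    hz.prodMk_nhds (Continuous.tendsto' (by fun_prop) _ _ (by simp))
  have hz0 : Tendsto (fun t : ℝ => t ^ 2 • z t) (𝓝 0) (𝓝 0) := by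
    have h : ContinuousAt (fun t : ℝ => t ^ 2 • z t) 0 := (by fun_prop : ContinuousAt
      (fun t : ℝ => t ^ 2) 0).smul hz
    simpa [ContinuousAt] using h
  refine ⟨fun t => k2 (z t, t ^ 2), hk2.continuous.continuousAt.comp
    (hz.prodMk (by fun_prop)), ?_⟩
  filter_upwards [hz0.eventually heq, hzz.eventually hke, hzz.eventually hk2e,
    hz.eventually hk0] with t e1 e2 e3 e4
  rw [e4] at e3
  rw [← e1, e2, e3, zero_smul, hψ0]
  ring

theorem exists_eq_smul_slope {Φ : R2 → R2} (hΦ : DifferentiableAt ℝ Φ 0) (h0 : Φ 0 = 0) (x : R2) :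
    ∃ n : ℝ → R2, ContinuousAt n 0 ∧ n 0 = fderiv ℝ Φ 0 x ∧ ∀ t : ℝ, Φ (t • x) = t • n t := by
  have hline : HasDerivAt (fun t : ℝ => t • x) x 0 := by
    simpa using (hasDerivAt_id (0 : ℝ)).smul_const x
  have h1 : HasDerivAt (fun t : ℝ => Φ (t • x)) (fderiv ℝ Φ 0 x) 0 := by
    have h2 : DifferentiableAt ℝ Φ ((0 : ℝ) • x) := by rwa [zero_smul]
    have h3 := h2.hasFDerivAt.comp_hasDerivAt 0 hline
    rwa [zero_smul] at h3
  refine ⟨dslope (fun t : ℝ => Φ (t • x)) 0, continuousAt_dslope_same.2 h1.differentiableAt,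
    ?_, fun t => ?_⟩
  · rw [dslope_same, h1.deriv]
  · have := sub_smul_dslope (fun t : ℝ => Φ (t • x)) 0 t
    simpa [h0] using this.symm

theorem jet_relations {F : R2 → R3} {Φ : R2 → R2} {Ψ : R3 → R3}
    (hΨ : ∀ᶠ y in 𝓝 (0 : R3), ContDiffAt ℝ ∞ Ψ y) (hΨ0 : Ψ 0 = 0) (hΦ : DifferentiableAt ℝ Φ 0)
    (hΦ0 : Φ 0 = 0) (h : ∀ᶠ q in 𝓝 (0 : R2), Ψ (F q) = fD4p (Φ q)) {x : R2} {z : ℝ → R3}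
    (hz : ContinuousAt z 0) (hFz : ∀ᶠ t in 𝓝 (0 : ℝ), F (t • x) = t ^ 2 • z t) :
    fderiv ℝ Ψ 0 (z 0) = ((fderiv ℝ Φ 0 x).1 * (fderiv ℝ Φ 0 x).2,
        (fderiv ℝ Φ 0 x).1 ^ 2 + 3 * (fderiv ℝ Φ 0 x).2 ^ 2, 0) ∧
      ∀ c : ℝ → ℝ, ContinuousAt c 0 →
        (∀ᶠ t in 𝓝 (0 : ℝ), (fderiv ℝ Ψ 0 (z t)).2.2 = t * c t) →
        c 0 = (fderiv ℝ Φ 0 x).1 ^ 2 * (fderiv ℝ Φ 0 x).2 + (fderiv ℝ Φ 0 x).2 ^ 3 := by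
  obtain ⟨n, hn, hn0, hΦn⟩ := exists_eq_smul_slope hΦ hΦ0 x
  have hd : HasFDerivAt Ψ (fderiv ℝ Ψ 0) 0 :=
    (hΨ.self_of_nhds.differentiableAt (by simp)).hasFDerivAt
  obtain ⟨e1, he1, h1⟩ := exists_eq_sq_mul_fderiv_add (ψ := fun y => (Ψ y).1)
    (hΨ.mono fun y hy => hy.fst) (by simp [hΨ0]) hz
  obtain ⟨e2, he2, h2⟩ := exists_eq_sq_mul_fderiv_add (ψ := fun y => (Ψ y).2.1)
    (hΨ.mono fun y hy => hy.snd.fst) (by simp [hΨ0]) hz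
  obtain ⟨e3, he3, h3⟩ := exists_eq_sq_mul_fderiv_add (ψ := fun y => (Ψ y).2.2)
    (hΨ.mono fun y hy => hy.snd.snd) (by simp [hΨ0]) hz
  have d1 : ∀ w, fderiv ℝ (fun y => (Ψ y).1) 0 w = (fderiv ℝ Ψ 0 w).1 := fun w => by
    rw [hd.fst.fderiv]; rfl
  have d2 : ∀ w, fderiv ℝ (fun y => (Ψ y).2.1) 0 w = (fderiv ℝ Ψ 0 w).2.1 := fun w => by
    rw [hd.snd.fst.fderiv]; rfl
  have d3 : ∀ w, fderiv ℝ (fun y => (Ψ y).2.2) 0 w = (fderiv ℝ Ψ 0 w).2.2 := fun w => by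
    rw [hd.snd.snd.fderiv]; rfl
  simp only [d1] at h1
  simp only [d2] at h2
  simp only [d3] at h3
  have hLz : ContinuousAt (fun t => fderiv ℝ Ψ 0 (z t)) 0 :=
    (fderiv ℝ Ψ 0).continuous.continuousAt.comp hz
  have hline : Tendsto (fun t : ℝ => t • x) (𝓝 0) (𝓝 0) :=
    Continuous.tendsto' (by fun_prop) _ _ (by simp)
  have hmain : ∀ᶠ t in 𝓝 (0 : ℝ), Ψ (t ^ 2 • z t) = (t ^ 2 * ((n t).1 * (n t).2),
      t ^ 2 * ((n t).1 ^ 2 + 3 * (n t).2 ^ 2), t ^ 3 * ((n t).1 ^ 2 * (n t).2 + (n t).2 ^ 3)) := by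
    filter_upwards [hFz, hline.eventually h] with t f1 f2
    rw [← f1, f2, hΦn]
    simp only [fD4p, Prod.smul_fst, Prod.smul_snd, smul_eq_mul, Prod.mk.injEq]
    exact ⟨by ring, by ring, by ring⟩
  have q1 := (eventually_eq_zero_of_ne (g := fun t => (fderiv ℝ Ψ 0 (z t)).1 + t ^ 2 * e1 t -
      (n t).1 * (n t).2) (by fun_prop) (by
    filter_upwards [h1, hmain] with t f1 f2 ht
    rw [f2] at f1
    exact mul_left_cancel₀ (pow_ne_zero 2 ht) (by linear_combination -f1))).self_of_nhds
  have q2 := (eventually_eq_zero_of_ne (g := fun t => (fderiv ℝ Ψ 0 (z t)).2.1 + t ^ 2 * e2 t -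
      ((n t).1 ^ 2 + 3 * (n t).2 ^ 2)) (by fun_prop) (by
    filter_upwards [h2, hmain] with t f1 f2 ht
    rw [f2] at f1
    exact mul_left_cancel₀ (pow_ne_zero 2 ht) (by linear_combination -f1))).self_of_nhds
  have q3 := (eventually_eq_zero_of_ne (g := fun t => (fderiv ℝ Ψ 0 (z t)).2.2 + t ^ 2 * e3 t -
      t * ((n t).1 ^ 2 * (n t).2 + (n t).2 ^ 3)) (by fun_prop) (by
    filter_upwards [h3, hmain] with t f1 f2 ht
    rw [f2] at f1
    exact mul_left_cancel₀ (pow_ne_zero 2 ht) (by linear_combination -f1))).self_of_nhds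
  refine ⟨Prod.ext ?_ (Prod.ext ?_ ?_), fun c hc hcz => ?_⟩
  · rw [← hn0]; linear_combination q1
  · rw [← hn0]; linear_combination q2
  · linear_combination q3
  · have q4 := (eventually_eq_zero_of_ne (g := fun t => c t + t * e3 t -
        ((n t).1 ^ 2 * (n t).2 + (n t).2 ^ 3)) (by fun_prop) (by
      filter_upwards [h3, hmain, hcz] with t f1 f2 f3 ht
      rw [f2, f3] at f1
      exact mul_left_cancel₀ (pow_ne_zero 3 ht) (by linear_combination -f1))).self_of_nhds
    rw [← hn0]
    linear_combination q4

theorem exists_eq_sq_smul_of_hasDerivAt {A : ℝ → R3} {w : ℝ → ℝ} {α : ℝ → R3}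
    (hA : ContDiff ℝ ∞ A) (hw : ContDiff ℝ ∞ w) (hα : ContDiff ℝ ∞ α) (hA0 : A 0 = 0)
    (hw0 : w 0 = 0) (hA' : ∀ u, HasDerivAt A (w u • α u) u) :
    ∃ k : ℝ → R3, Continuous k ∧ k 0 = (deriv w 0 / 2) • α 0 ∧
      ∀ᶠ u in 𝓝 (0 : ℝ), A u = u ^ 2 • k u := by
  have hA2 : ∀ u, HasDerivAt (fun u => (A u).2) (w u • (α u).2) u := fun u =>
    (ContinuousLinearMap.snd ℝ ℝ R2).hasFDerivAt.comp_hasDerivAt u (hA' u)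
  obtain ⟨k1, hk1, h10, h1⟩ := exists_eq_sq_mul_of_hasDerivAt hA.fst hw hα.fst (by simp [hA0]) hw0
    fun u => (ContinuousLinearMap.fst ℝ ℝ R2).hasFDerivAt.comp_hasDerivAt u (hA' u)
  obtain ⟨k2, hk2, h20, h2⟩ := exists_eq_sq_mul_of_hasDerivAt hA.snd.fst hw hα.snd.fst
    (by simp [hA0]) hw0
    fun u => (ContinuousLinearMap.fst ℝ ℝ ℝ).hasFDerivAt.comp_hasDerivAt u (hA2 u)
  obtain ⟨k3, hk3, h30, h3⟩ := exists_eq_sq_mul_of_hasDerivAt hA.snd.snd hw hα.snd.snd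
    (by simp [hA0]) hw0
    fun u => (ContinuousLinearMap.snd ℝ ℝ ℝ).hasFDerivAt.comp_hasDerivAt u (hA2 u)
  refine ⟨fun u => (k1 u, k2 u, k3 u),
    hk1.continuous.prodMk (hk2.continuous.prodMk hk3.continuous), ?_, ?_⟩
  · refine Prod.ext ?_ (Prod.ext ?_ ?_)
    · simp only [h10, Prod.smul_fst, smul_eq_mul]; ring
    · simp only [h20, Prod.smul_fst, Prod.smul_snd, smul_eq_mul]; ring
    · simp only [h30, Prod.smul_snd, smul_eq_mul]; ring
  · filter_upwards [h1, h2, h3] with u e1 e2 e3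
    exact Prod.ext e1 (Prod.ext e2 e3)

theorem cubic_form_not_degenerate {p q : R2} {c : ℝ}
    (hpq : ∀ a b : ℝ, a * p.1 + b * q.1 = 0 → a * p.2 + b * q.2 = 0 → a = 0 ∧ b = 0)
    (h : ∀ a b : ℝ, b ^ 3 * c = (a * p.1 + b * q.1) ^ 2 * (a * p.2 + b * q.2) +
      (a * p.2 + b * q.2) ^ 3) : False := by
  have hp2 : p.2 = 0 := by
    have h10 := h 1 0
    by_contra hp
    have h0 : p.2 * (p.1 ^ 2 + p.2 ^ 2) = 0 := by linear_combination -h10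
    exact (mul_ne_zero hp (by positivity)) h0
  have hp1 : p.1 ≠ 0 := fun hp => one_ne_zero (hpq 1 0 (by simp [hp]) (by simp [hp2])).1
  have hq2 : q.2 ≠ 0 := fun hq =>
    hp1 (neg_eq_zero.1 (hpq q.1 (-p.1) (by ring) (by simp [hp2, hq])).2)
  have h0 : (q.2 * 2) * p.1 ^ 2 = 0 := by
    have h01 := h 0 1
    have h11 := h 1 1
    have h12 := h (-1) 1
    rw [hp2] at h01 h11 h12
    linear_combination 2 * h01 - h11 - h12
  exact mul_ne_zero (mul_ne_zero hq2 two_ne_zero) (pow_ne_zero 2 hp1) h0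

theorem null_curves_of_aEquiv_fD4p {A B : ℝ → R3} {g1 g2 w1 w2 : ℝ → ℝ} (hA : ContDiff ℝ ∞ A)
    (hB : ContDiff ℝ ∞ B) (hg1 : ContDiff ℝ ∞ g1) (hg2 : ContDiff ℝ ∞ g2)
    (hw1 : ContDiff ℝ ∞ w1) (hw2 : ContDiff ℝ ∞ w2) (hA0 : A 0 = 0) (hB0 : B 0 = 0)
    (hA' : ∀ u, HasDerivAt A (w1 u • ((1, -g1 u ^ 2, g1 u) : R3)) u)
    (hB' : ∀ v, HasDerivAt B (w2 v • ((-g2 v ^ 2, 1, -g2 v) : R3)) v)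
    (h : AEquiv (fun q => A q.1 + B q.2) 0 fD4p (0, 0)) :
    w1 0 = 0 ∧ w2 0 = 0 ∧ g1 0 * g2 0 ≠ 1 ∧ deriv g1 0 * deriv g2 0 ≠ 0 ∧
      deriv w1 0 * deriv w2 0 ≠ 0 := by
  obtain ⟨Φ, Ψ, hΦ, hΦ0, hΨ, hΨ0, heq⟩ := h
  have hF0 : (fun q : R2 => A q.1 + B q.2) 0 = 0 := by simp [hA0, hB0]
  rw [hF0] at hΨ hΨ0
  replace hΦ0 : Φ 0 = 0 := hΦ0
  replace hΨ0 : Ψ 0 = 0 := hΨ0.trans (by simp [fD4p])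
  have hΦd : DifferentiableAt ℝ Φ 0 := hΦ.contDiffAt.self_of_nhds.differentiableAt (by simp)
  have hΨd : DifferentiableAt ℝ Ψ 0 := hΨ.contDiffAt.self_of_nhds.differentiableAt (by simp)
  have hL : ∀ {v : R3}, fderiv ℝ Ψ 0 v = 0 → v = 0 := fun {v} hv =>
    hΨ.injective_fderiv (hv.trans (map_zero _).symm)
  have hM : ∀ {x : R2}, fderiv ℝ Φ 0 x = 0 → x = 0 := fun {x} hx =>
    hΦ.injective_fderiv (hx.trans (map_zero _).symm)
  have first : ∀ {γ : ℝ → R3} {x : R2} {v : R3}, HasDerivAt γ v 0 → γ 0 = 0 →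
      (∀ t : ℝ, γ t = A (t • x).1 + B (t • x).2) → v = 0 := by
    intro γ x v hγ hγ0 hγx
    have hline : Tendsto (fun t : ℝ => t • x) (𝓝 0) (𝓝 0) :=
      Continuous.tendsto' (by fun_prop) _ _ (by simp)
    have hlined : HasDerivAt (fun t : ℝ => t • x) x 0 := by
      simpa using (hasDerivAt_id (0 : ℝ)).smul_const x
    have e1 := (hγ0 ▸ hΨd : DifferentiableAt ℝ Ψ (γ 0)).hasFDerivAt.comp_hasDerivAt 0 hγ
    have e2 : HasFDerivAt (fD4p ∘ Φ) ((fderiv ℝ fD4p 0).comp (fderiv ℝ Φ 0)) ((0 : ℝ) • x) := by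
      have hD : DifferentiableAt ℝ fD4p (Φ 0) := by
        unfold fD4p
        fun_prop
      have := hD.hasFDerivAt.comp 0 hΦd.hasFDerivAt
      rw [hΦ0] at this
      rwa [zero_smul]
    have e3 := (e2.comp_hasDerivAt 0 hlined).congr_of_eventuallyEq (f₁ := Ψ ∘ γ) (by
      filter_upwards [hline.eventually heq] with t ht
      simpa [hγx] using ht)
    have e4 := e1.unique e3
    rw [hγ0, fderiv_fD4p_zero] at e4
    exact hL e4
  have hw10 : w1 0 = 0 := by
    have e := first (x := (1, 0)) (hA' 0) hA0 (fun t => by simp [hB0])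
    simpa using congrArg Prod.fst e
  have hw20 : w2 0 = 0 := by
    have e := first (x := (0, 1)) (hB' 0) hB0 (fun t => by simp [hA0])
    simpa using congrArg (fun y : R3 => y.2.1) e
  obtain ⟨kA, hkA, hkA0, hkAe⟩ := exists_eq_sq_smul_of_hasDerivAt hA hw1
    (α := fun u => (1, -g1 u ^ 2, g1 u)) (by fun_prop) hA0 hw10 hA'
  obtain ⟨kB, hkB, hkB0, hkBe⟩ := exists_eq_sq_smul_of_hasDerivAt hB hw2
    (α := fun v => (-g2 v ^ 2, 1, -g2 v)) (by fun_prop) hB0 hw20 hB'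
  have hmul : ∀ a : ℝ, Tendsto (fun t : ℝ => t * a) (𝓝 0) (𝓝 0) := fun a =>
    Continuous.tendsto' (by fun_prop) _ _ (by simp)
  have hrel := fun a b : ℝ => jet_relations (F := fun q => A q.1 + B q.2) (x := (a, b))
    (z := fun t => a ^ 2 • kA (t * a) + b ^ 2 • kB (t * b)) hΨ.contDiffAt hΨ0 hΦd hΦ0 heq
    (by fun_prop) (by
      filter_upwards [(hmul a).eventually hkAe, (hmul b).eventually hkBe] with t e1 e2
      simp only [Prod.smul_mk, smul_eq_mul, e1, e2, smul_add, smul_smul, mul_pow])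
  set L := fderiv ℝ Ψ 0 with hL'
  set M := fderiv ℝ Φ 0 with hM'
  have quad : ∀ a b : ℝ, (a ^ 2 * (deriv w1 0 / 2)) • L (1, -g1 0 ^ 2, g1 0) +
      (b ^ 2 * (deriv w2 0 / 2)) • L (-g2 0 ^ 2, 1, -g2 0) =
        ((M (a, b)).1 * (M (a, b)).2, (M (a, b)).1 ^ 2 + 3 * (M (a, b)).2 ^ 2, 0) := by
    intro a b
    have e := (hrel a b).1
    simp only [zero_mul, hkA0, hkB0] at e
    rw [← e, map_add, smul_smul, smul_smul, map_smul, map_smul]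
  have anis : ∀ {y : R2}, y.1 * y.2 = 0 → y.1 ^ 2 + 3 * y.2 ^ 2 = 0 → y = 0 := by
    intro y _ h2
    exact Prod.ext (by simpa using (by nlinarith [sq_nonneg y.1, sq_nonneg y.2] : y.1 ^ 2 = 0))
      (by simpa using (by nlinarith [sq_nonneg y.1, sq_nonneg y.2] : y.2 ^ 2 = 0))
  have hw1' : deriv w1 0 ≠ 0 := by
    intro h0
    have e := quad 1 0
    simp only [h0, zero_div, mul_zero, zero_smul, ne_eq, OfNat.ofNat_ne_zero, not_false_eq_true,
      zero_pow, zero_mul, add_zero, Prod.ext_iff, Prod.fst_zero, Prod.snd_zero] at e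
    have := hM (anis e.1.symm e.2.1.symm)
    simp at this
  have hw2' : deriv w2 0 ≠ 0 := by
    intro h0
    have e := quad 0 1
    simp only [h0, zero_div, mul_zero, zero_smul, ne_eq, OfNat.ofNat_ne_zero, not_false_eq_true,
      zero_pow, zero_mul, add_zero, Prod.ext_iff, Prod.fst_zero, Prod.snd_zero] at e
    have := hM (anis e.1.symm e.2.1.symm)
    simp at this
  have hgg : g1 0 * g2 0 ≠ 1 := by
    intro hgh
    have hβ : ((-g2 0 ^ 2, 1, -g2 0) : R3) = (-g2 0 ^ 2) • ((1, -g1 0 ^ 2, g1 0) : R3) := by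
      simp only [Prod.smul_mk, smul_eq_mul, Prod.mk.injEq]
      refine ⟨by ring, ?_, ?_⟩
      · linear_combination (-1 - g1 0 * g2 0) * hgh
      · linear_combination g2 0 * hgh
    have hsurj : Function.Surjective M :=
      (LinearMap.injective_iff_surjective (f := M.toLinearMap)).1 hΦ.injective_fderiv
    have line : ∀ y : R2, ∃ s : ℝ, s • L (1, -g1 0 ^ 2, g1 0) =
        (y.1 * y.2, y.1 ^ 2 + 3 * y.2 ^ 2, 0) := by
      intro y
      obtain ⟨⟨a, b⟩, rfl⟩ := hsurj y
      have e := quad a b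
      rw [hβ, map_smul, smul_smul, ← add_smul] at e
      exact ⟨_, e⟩
    obtain ⟨s, hs⟩ := line (1, 0)
    obtain ⟨t, ht⟩ := line (1, 1)
    simp only [Prod.ext_iff, Prod.smul_fst, Prod.smul_snd, smul_eq_mul] at hs ht
    have hs0 : s ≠ 0 := by
      rintro rfl
      norm_num at hs
    have hv := (mul_eq_zero.1 (hs.1.trans (by norm_num))).resolve_left hs0
    rw [hv] at ht
    norm_num at ht
  have hα : (L (1, -g1 0 ^ 2, g1 0)).2.2 = 0 := by
    have e := congrArg (fun y : R3 => y.2.2) (quad 1 0)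
    simpa [hw1'] using e
  have hβ : (L (-g2 0 ^ 2, 1, -g2 0)).2.2 = 0 := by
    have e := congrArg (fun y : R3 => y.2.2) (quad 0 1)
    simpa [hw2'] using e
  let ℓ : R3 →L[ℝ] ℝ :=
    (ContinuousLinearMap.snd ℝ ℝ ℝ).comp ((ContinuousLinearMap.snd ℝ ℝ R2).comp L)
  have hℓ : ∀ v, ℓ v = (L v).2.2 := fun _ => rfl
  have cubic : ∀ {C k α : ℝ → R3} {w : ℝ → ℝ}, ContDiff ℝ ∞ C → ContDiff ℝ ∞ w →
      ContDiff ℝ ∞ α → C 0 = 0 → w 0 = 0 → ℓ (α 0) = 0 → (∀ u, HasDerivAt C (w u • α u) u) →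
      k 0 = (deriv w 0 / 2) • α 0 → (∀ᶠ u in 𝓝 (0 : ℝ), C u = u ^ 2 • k u) →
      ∃ c : ℝ → ℝ, Continuous c ∧ (deriv α 0 = 0 → c 0 = 0) ∧
        ∀ᶠ u in 𝓝 (0 : ℝ), ℓ (k u) = u * c u := by
    intro C k α w hC hw hα hC0 hw0 hα0 hCd hk0 hk
    obtain ⟨c, hc, hc0, hce⟩ := exists_eq_cube_mul_of_hasDerivAt (ℓ.contDiff.comp hC) hw
      (ℓ.contDiff.comp hα) (by simp [hC0]) hw0 hα0 fun u => by
        have e := ℓ.hasFDerivAt.comp_hasDerivAt u (hCd u)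
        rwa [map_smul, smul_eq_mul] at e
    refine ⟨c, hc.continuous, fun hd => ?_, ?_⟩
    · have e := ℓ.hasFDerivAt.comp_hasDerivAt 0 (hα.differentiable (by simp) 0).hasDerivAt
      rw [hc0, e.deriv, hd]
      simp
    · filter_upwards [hce, hk] with u e1 e2
      by_cases hu : u = 0
      · simp [hu, hk0, hα0]
      · rw [Function.comp, e2, map_smul, smul_eq_mul] at e1
        exact mul_left_cancel₀ (pow_ne_zero 2 hu) (by linear_combination e1)
  obtain ⟨cA, hcA, hcA0, hcAe⟩ := cubic hA hw1
    (α := fun u => (1, -g1 u ^ 2, g1 u)) (by fun_prop) hA0 hw10 hα hA' hkA0 hkAe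
  obtain ⟨cB, hcB, hcB0, hcBe⟩ := cubic hB hw2
    (α := fun v => (-g2 v ^ 2, 1, -g2 v)) (by fun_prop) hB0 hw20 hβ hB' hkB0 hkBe
  have hMab : ∀ a b : ℝ, M (a, b) = a • M (1, 0) + b • M (0, 1) := fun a b => by
    rw [← map_smul, ← map_smul, ← map_add]
    simp
  have hcub : ∀ a b : ℝ, a ^ 3 * cA 0 + b ^ 3 * cB 0 =
      (a * (M (1, 0)).1 + b * (M (0, 1)).1) ^ 2 * (a * (M (1, 0)).2 + b * (M (0, 1)).2) +
        (a * (M (1, 0)).2 + b * (M (0, 1)).2) ^ 3 := by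
    intro a b
    have e := (hrel a b).2 (fun t => a ^ 3 * cA (t * a) + b ^ 3 * cB (t * b)) (by fun_prop) (by
      filter_upwards [(hmul a).eventually hcAe, (hmul b).eventually hcBe] with t e1 e2
      rw [← hℓ, map_add, map_smul, map_smul, e1, e2, smul_eq_mul, smul_eq_mul]
      ring)
    simpa [hMab a b] using e
  have hindep : ∀ a b : ℝ, a * (M (1, 0)).1 + b * (M (0, 1)).1 = 0 →
      a * (M (1, 0)).2 + b * (M (0, 1)).2 = 0 → a = 0 ∧ b = 0 := by
    intro a b e1 e2
    have e := hM (x := (a, b)) (by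
      rw [hMab]
      exact Prod.ext (by simpa using e1) (by simpa using e2))
    exact ⟨congrArg Prod.fst e, congrArg Prod.snd e⟩
  have hg1' : deriv g1 0 ≠ 0 := by
    intro h0
    have hd := (hg1.differentiable (by simp) 0).hasDerivAt
    rw [h0] at hd
    have hc := hcA0 (by
      have e := (hasDerivAt_const (0 : ℝ) (1 : ℝ)).prodMk ((hd.pow 2).neg.prodMk hd)
      exact e.deriv.trans (by simp))
    refine cubic_form_not_degenerate (c := cB 0) hindep fun a b => ?_
    rw [← hcub, hc, mul_zero, zero_add]
  have hg2' : deriv g2 0 ≠ 0 := by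
    intro h0
    have hd := (hg2.differentiable (by simp) 0).hasDerivAt
    rw [h0] at hd
    have hc := hcB0 (by
      have e := (hd.pow 2).neg.prodMk ((hasDerivAt_const (0 : ℝ) (1 : ℝ)).prodMk hd.neg)
      exact e.deriv.trans (by simp))
    refine cubic_form_not_degenerate (p := M (0, 1)) (q := M (1, 0)) (c := cA 0) (fun a b e1 e2 =>
      (hindep b a (by linear_combination e1) (by linear_combination e2)).symm) fun a b => ?_
    have e := hcub b a
    rw [hc] at e
    linear_combination e
  exact ⟨hw10, hw20, hgg, mul_ne_zero hg1' hg2', mul_ne_zero hw1' hw2'⟩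

/-- Null coordinates `(x - t, t + x, y)` of the point `(t, x, y)`. -/
def nullCoord : R3 →L[ℝ] R3 :=
  ((ContinuousLinearMap.fst ℝ ℝ ℝ).comp (ContinuousLinearMap.snd ℝ ℝ R2) -
    ContinuousLinearMap.fst ℝ ℝ R2).prod
  (((ContinuousLinearMap.fst ℝ ℝ R2) +
    (ContinuousLinearMap.fst ℝ ℝ ℝ).comp (ContinuousLinearMap.snd ℝ ℝ R2)).prod
    ((ContinuousLinearMap.snd ℝ ℝ ℝ).comp (ContinuousLinearMap.snd ℝ ℝ R2)))

theorem nullCoord_apply (x : R3) : nullCoord x = (x.2.1 - x.1, x.1 + x.2.1, x.2.2) := rfl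

theorem nullCoord_injective : Function.Injective nullCoord := by
  intro x y h
  simp only [nullCoord_apply, Prod.ext_iff] at h
  obtain ⟨h1, h2, h3⟩ := h
  exact Prod.ext (by linarith) (Prod.ext (by linarith) h3)

theorem IsGTMS.sub_eq_add {f : R2 → R3} {g1 g2 w1 w2 : ℝ → ℝ} (hf : IsGTMS f g1 g2 w1 w2)
    (p q : R2) : f q - f p = (f (q.1, p.2) - f p) + (f (p.1, q.2) - f p) := by
  have hd := hf.smooth_f.differentiable (by simp)
  have hu : ∀ v u : ℝ, HasDerivAt (fun u => f (u, v)) (pu f (u, v)) u := fun v u =>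
    (hd (u, v)).hasFDerivAt.comp_hasDerivAt u ((hasDerivAt_id u).prodMk (hasDerivAt_const u v))
  have hc : ∀ u, HasDerivAt (fun u => f (u, q.2) - f (u, p.2)) 0 u := fun u => by
    have := (hu q.2 u).sub (hu p.2 u)
    rwa [hf.deriv_u, hf.deriv_u, sub_self] at this
  have := is_const_of_deriv_eq_zero (fun u => (hc u).differentiableAt) (fun u => (hc u).deriv)
    q.1 p.1
  rw [sub_eq_sub_iff_add_eq_add] at this
  rw [← sub_eq_zero] at this ⊢
  rw [← this]
  abel

theorem IsGTMS.hasDerivAt_nullCoord_fst {f : R2 → R3} {g1 g2 w1 w2 : ℝ → ℝ}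
    (hf : IsGTMS f g1 g2 w1 w2) (p : R2) (u : ℝ) :
    HasDerivAt (fun u => nullCoord (f (p.1 + u, p.2) - f p))
      (w1 (p.1 + u) • ((1, -g1 (p.1 + u) ^ 2, g1 (p.1 + u)) : R3)) u := by
  have hd := (hf.smooth_f.differentiable (by simp) (p.1 + u, p.2)).hasFDerivAt.comp_hasDerivAt u
    (((hasDerivAt_id u).const_add p.1).prodMk (hasDerivAt_const u p.2))
  have := nullCoord.hasFDerivAt.comp_hasDerivAt u (hd.sub_const (f p))
  refine this.congr_deriv ?_
  change nullCoord (pu f _) = _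
  rw [hf.deriv_u, nullCoord_apply]
  simp only [Prod.smul_mk, smul_eq_mul, Prod.mk.injEq]
  exact ⟨by ring, by ring, by ring⟩

theorem IsGTMS.hasDerivAt_nullCoord_snd {f : R2 → R3} {g1 g2 w1 w2 : ℝ → ℝ}
    (hf : IsGTMS f g1 g2 w1 w2) (p : R2) (v : ℝ) :
    HasDerivAt (fun v => nullCoord (f (p.1, p.2 + v) - f p))
      (w2 (p.2 + v) • ((-g2 (p.2 + v) ^ 2, 1, -g2 (p.2 + v)) : R3)) v := by
  have hd := (hf.smooth_f.differentiable (by simp) (p.1, p.2 + v)).hasFDerivAt.comp_hasDerivAt v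
    ((hasDerivAt_const v p.1).prodMk ((hasDerivAt_id v).const_add p.2))
  have := nullCoord.hasFDerivAt.comp_hasDerivAt v (hd.sub_const (f p))
  refine this.congr_deriv ?_
  change nullCoord (pv f _) = _
  rw [hf.deriv_v, nullCoord_apply]
  simp only [Prod.smul_mk, smul_eq_mul, Prod.mk.injEq]
  exact ⟨by ring, by ring, by ring⟩

theorem IsGTMS.aEquiv_null_curves {f : R2 → R3} {g1 g2 w1 w2 : ℝ → ℝ}
    (hf : IsGTMS f g1 g2 w1 w2) (p : R2) :
    AEquiv f p (fun q => nullCoord (f (p.1 + q.1, p.2) - f p) +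
      nullCoord (f (p.1, p.2 + q.2) - f p)) 0 := by
  have hΨ : IsLocalDiffeoAt (fun x => nullCoord (x - f p)) (f p) := by
    refine isLocalDiffeoAt_of_injective (.of_forall fun x => by fun_prop) ?_
    have : HasFDerivAt (fun x => nullCoord (x - f p)) nullCoord (f p) :=
      nullCoord.hasFDerivAt.comp (f p) ((hasFDerivAt_id (f p)).sub_const (f p))
    rw [this.fderiv]
    exact nullCoord_injective
  refine AEquiv.trans (AEquiv.of_target (g := fun q => nullCoord (f q - f p)) hΨ
    (.of_forall fun _ => rfl)) (AEquiv.of_source (isLocalDiffeoAt_const_add_id (-p) p)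
      (neg_add_cancel p) (.of_forall fun q => ?_))
  simp only [← map_add]
  rw [hf.sub_eq_add p q]
  simp

/-- criterion for the D₄⁺ singularity. -/
theorem criterion_D4_plus
    (f : R2 → R3) (g1 g2 w1 w2 : ℝ → ℝ) (hf : IsGTMS f g1 g2 w1 w2)
    (p : R2) :
    AEquiv f p fD4p (0, 0) ↔
      (w1 p.1 = 0 ∧ w2 p.2 = 0 ∧ g1 p.1 * g2 p.2 ≠ 1 ∧
        deriv g1 p.1 * deriv g2 p.2 ≠ 0 ∧ deriv w1 p.1 * deriv w2 p.2 ≠ 0) := by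
  have hs := hf.smooth_f
  have hg1 := hf.smooth_g1
  have hg2 := hf.smooth_g2
  have hw1 := hf.smooth_w1
  have hw2 := hf.smooth_w2
  have hA : ContDiff ℝ ∞ fun u => nullCoord (f (p.1 + u, p.2) - f p) := by fun_prop
  have hB : ContDiff ℝ ∞ fun v => nullCoord (f (p.1, p.2 + v) - f p) := by fun_prop
  have hF := hf.aEquiv_null_curves p
  constructor
  · intro h
    have := null_curves_of_aEquiv_fD4p hA hB (g1 := fun u => g1 (p.1 + u))
      (g2 := fun v => g2 (p.2 + v)) (w1 := fun u => w1 (p.1 + u)) (w2 := fun v => w2 (p.2 + v))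
      (by fun_prop) (by fun_prop) (by fun_prop) (by fun_prop) (by simp) (by simp)
      (hf.hasDerivAt_nullCoord_fst p) (hf.hasDerivAt_nullCoord_snd p)
      ((hF.symm hs.continuous.continuousAt).trans h)
    simpa only [deriv_comp_const_add, add_zero] using this
  · rintro ⟨h1, h2, h3, h4, h5⟩
    refine hF.trans (aEquiv_fD4p_of_null_curves hA hB (g1 := fun u => g1 (p.1 + u))
      (g2 := fun v => g2 (p.2 + v)) (w1 := fun u => w1 (p.1 + u)) (w2 := fun v => w2 (p.2 + v))
      (by fun_prop) (by fun_prop) (by fun_prop) (by fun_prop) (by simp) (by simp)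
      (hf.hasDerivAt_nullCoord_fst p) (hf.hasDerivAt_nullCoord_snd p) ?_ ?_ ?_ ?_ ?_) <;>
    simpa only [deriv_comp_const_add, add_zero]
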